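/- arXiv:math/0602508 — 5 statements merged into one kernel-verified Lean document; each statement's English description precedes it below -/
import Mathlib

section
/- Let G be a finite group admitting a surjective group homomorphism π from a free group F (on any set) onto G whose kernel is the normal closure in F of a subset of cardinality r. Then for every prime p and every F_pG-module M that is finite-dimensional over F_p, one has dim_{F_p} H²(G, M) ≤ r · dim_{F_p} M. -/
/-!
A 2-cocycle `z` of `G` defines an extension of `G` by `A`, and a homomorphism `f : H → G` lifts
to this extension exactly when the pullback of `z` to `H` is a coboundary. For a presentation
`π : F → G` with `F` free a lift always exists. Whenever some lift is trivial on the relators it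
is trivial on `ker π`, so it descends to a splitting over `G` and `z` is a coboundary. Thus the
pairs (cocycle, lift of `π`) form a `k`-module that surjects onto `H²(G, A)`, and evaluating the
lift on the relators has its kernel inside the kernel of this surjection: `H²(G, A)` is a quotient
of a submodule of `A ^ r`.
-/

open groupCohomology

universe u v

theorem rank_le_rank_of_ker_le_ker {R : Type*} [Ring R] {K : Type*} {N P : Type v}
    [AddCommGroup K] [Module R K] [AddCommGroup N] [Module R N] [AddCommGroup P] [Module R P]
    (f : K →ₗ[R] N) (g : K →ₗ[R] P) (hg : Function.Surjective g)
    (hker : LinearMap.ker f ≤ LinearMap.ker g) :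
    Module.rank R P ≤ Module.rank R N := by
  let q : LinearMap.range f →ₗ[R] P :=
    (LinearMap.ker f).liftQ g hker ∘ₗ f.quotKerEquivRange.symm.toLinearMap
  have hlift : Function.Surjective ((LinearMap.ker f).liftQ g hker) := by
    rw [← LinearMap.range_eq_top, Submodule.range_liftQ, LinearMap.range_eq_top.2 hg]
  have hq : Function.Surjective q := hlift.comp f.quotKerEquivRange.symm.surjective
  exact (q.rank_le_of_surjective hq).trans (LinearMap.range f).rank_le

section CocycleExtension

variable {k G : Type u} [CommRing k] [Group G] {A : Rep.{v} k G}

/-- The extension of `G` by `A` attached to a 2-cocycle `z`: pairs `(a, g)` multiplied by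
`(a, g) (b, h) = (a + g • b + z (g, h), g h)`. As `z` need not be normalized, the identity is
`(-z (1, 1), 1)`. -/
@[ext] structure CocycleExtension (z : cocycles₂ A) where
  left : A
  right : G

namespace CocycleExtension

variable {z : cocycles₂ A}

instance : Mul (CocycleExtension z) :=
  ⟨fun x y => ⟨x.left + A.ρ x.right y.left + z (x.right, y.right), x.right * y.right⟩⟩

instance : One (CocycleExtension z) := ⟨⟨-z (1, 1), 1⟩⟩

instance : Inv (CocycleExtension z) :=
  ⟨fun x => ⟨-z (1, 1) - A.ρ x.right⁻¹ x.left - z (x.right⁻¹, x.right), x.right⁻¹⟩⟩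

theorem mul_left (x y : CocycleExtension z) :
    (x * y).left = x.left + A.ρ x.right y.left + z (x.right, y.right) := rfl

@[simp] theorem mul_right (x y : CocycleExtension z) : (x * y).right = x.right * y.right := rfl

theorem one_left : (1 : CocycleExtension z).left = -z (1, 1) := rfl

@[simp] theorem one_right : (1 : CocycleExtension z).right = 1 := rfl

theorem inv_left (x : CocycleExtension z) :
    x⁻¹.left = -z (1, 1) - A.ρ x.right⁻¹ x.left - z (x.right⁻¹, x.right) := rfl

@[simp] theorem inv_right (x : CocycleExtension z) : x⁻¹.right = x.right⁻¹ := rfl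

instance : Group (CocycleExtension z) :=
  Group.ofLeftAxioms
    (fun x y w => by
      have hz := (mem_cocycles₂_iff (z : G × G → A)).1 z.2 x.right y.right w.right
      ext
      · simp only [mul_left, mul_right, map_mul, map_add, Module.End.mul_apply]
        rw [eq_sub_of_add_eq hz]
        abel
      · exact mul_assoc ..)
    (fun x => by
      ext
      · simp [mul_left, one_left, cocycles₂_map_one_fst]
      · exact one_mul _)
    (fun x => by
      ext
      · simp only [mul_left, inv_left, one_left, inv_right]
        abel
      · exact inv_mul_cancel _)

variable (z) in
/-- The projection of the extension onto `G`. -/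
@[simps] def rightHom : CocycleExtension z →* G where
  toFun := right
  map_one' := one_right
  map_mul' := mul_right

end CocycleExtension

variable {H : Type*} [Group H]

/-- The pairs `(φ, z)` such that `x ↦ (φ x, f x)` is a homomorphism lifting `f : H → G` to the
extension attached to the 2-cocycle `z`; equivalently, `-φ` has coboundary `f^* z`. -/
def cocycleLifts (A : Rep.{v} k G) (f : H →* G) : Submodule k ((H → A) × cocycles₂ A) where
  carrier := {c | ∀ x y, c.1 (x * y) = c.1 x + A.ρ (f x) (c.1 y) + c.2 (f x, f y)}
  zero_mem' x y := by
    change (0 : A) = 0 + A.ρ (f x) 0 + 0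
    simp
  add_mem' {c d} hc hd x y := by
    simp only [Prod.fst_add, Prod.snd_add, Pi.add_apply, map_add, hc x y, hd x y]
    change _ = _ + (c.2 (f x, f y) + d.2 (f x, f y))
    abel
  smul_mem' r c hc x y := by
    simp only [Prod.smul_fst, Prod.smul_snd, Pi.smul_apply, map_smul, hc x y, smul_add]
    rfl

variable {f : H →* G} {φ : H → A} {z : cocycles₂ A}

theorem left_comp_mem_cocycleLifts {F : H →* CocycleExtension z}
    (hF : (CocycleExtension.rightHom z).comp F = f) :
    (fun x => (F x).left, z) ∈ cocycleLifts A f := by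
  subst hF
  intro x y
  simp [CocycleExtension.mul_left]

theorem exists_mem_cocycleLifts_of_freeGroup {α : Type*} (π : FreeGroup α →* G)
    (z : cocycles₂ A) : ∃ φ, (φ, z) ∈ cocycleLifts A π := by
  let F : FreeGroup α →* CocycleExtension z := FreeGroup.lift fun a => ⟨0, π (FreeGroup.of a)⟩
  exact ⟨_, left_comp_mem_cocycleLifts (F := F) (by ext a; simp [F])⟩

theorem exists_mem_cocycleLifts_id_of_ker_eq_normalClosure (hf : Function.Surjective f) {S : Set H}
    (hker : f.ker = Subgroup.normalClosure S) (h : (φ, z) ∈ cocycleLifts A f)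
    (hφ : ∀ s ∈ S, φ s + z (1, 1) = 0) :
    ∃ ψ, (ψ, z) ∈ cocycleLifts A (MonoidHom.id G) := by
  let F : H →* CocycleExtension z :=
    MonoidHom.mk' (fun x => ⟨φ x, f x⟩) fun x y => CocycleExtension.ext (h x y) (map_mul f x y)
  have hle : f.ker ≤ F.ker := by
    rw [hker]
    refine Subgroup.normalClosure_le_normal fun s hs => ?_
    have hs' : s ∈ f.ker := hker ▸ Subgroup.subset_normalClosure hs
    exact CocycleExtension.ext (eq_neg_of_add_eq_zero_left (hφ s hs)) hs'
  let σ : G →* CocycleExtension z := f.liftOfSurjective hf ⟨F, hle⟩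
  have hσ : σ.comp f = F := f.liftOfRightInverse_comp _ _ ⟨F, hle⟩
  refine ⟨_, left_comp_mem_cocycleLifts (F := σ) ((MonoidHom.cancel_right hf).1 ?_)⟩
  rw [MonoidHom.comp_assoc, hσ]
  rfl

theorem mem_coboundaries₂_of_mem_cocycleLifts_id {ψ : G → A}
    (h : (ψ, z) ∈ cocycleLifts A (MonoidHom.id G)) : ⇑z ∈ coboundaries₂ A := by
  refine ⟨-ψ, funext fun ⟨g, j⟩ => ?_⟩
  have hψ : ψ (g * j) = ψ g + A.ρ g (ψ j) + z (g, j) := h g j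
  simp only [d₁₂_hom_apply, Pi.neg_apply, map_neg, hψ]
  abel

/-- Evaluation of the `A`-component of a lift at a family `s` in `H`. The shift by `z (1, 1)`
makes it vanish, for `s` in `ker f`, exactly when the lift sends each `s i` to the identity
`(-z (1, 1), 1)` of the extension. -/
def cocycleLiftsEval (A : Rep.{v} k G) (f : H →* G) {ι : Type*} (s : ι → H) :
    cocycleLifts A f →ₗ[k] ι → A where
  toFun c i := c.1.1 (s i) + c.1.2 (1, 1)
  map_add' _ _ := funext fun _ => add_add_add_comm ..
  map_smul' r c := funext fun i => (smul_add r (c.1.1 (s i)) (c.1.2 (1, 1))).symm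

end CocycleExtension

theorem rank_H2_le_rank_pi {k G : Type u} [CommRing k] [Group G] (A : Rep.{u} k G)
    {α : Type*} {ι : Type u} (π : FreeGroup α →* G) (hπ : Function.Surjective π)
    (s : ι → FreeGroup α) (hker : π.ker = Subgroup.normalClosure (Set.range s)) :
    Module.rank k (groupCohomology A 2) ≤ Module.rank k (ι → A) := by
  let toH2 : cocycleLifts A π →ₗ[k] groupCohomology A 2 :=
    (H2π A).hom ∘ₗ LinearMap.snd k _ _ ∘ₗ (cocycleLifts A π).subtype
  refine rank_le_rank_of_ker_le_ker (K := cocycleLifts A π)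
    (cocycleLiftsEval A π s) toH2 (fun x => ?_) ?_
  · induction x using H2_induction_on with
    | h z =>
      obtain ⟨φ, hφ⟩ := exists_mem_cocycleLifts_of_freeGroup π z
      exact ⟨⟨(φ, z), hφ⟩, rfl⟩
  · rintro ⟨⟨φ, z⟩, h⟩ hs
    have hφ : ∀ x ∈ Set.range s, φ x + z (1, 1) = 0 := by
      rintro _ ⟨i, rfl⟩
      exact congrFun hs i
    obtain ⟨ψ, hψ⟩ := exists_mem_cocycleLifts_id_of_ker_eq_normalClosure hπ hker h hφ
    exact (H2π_eq_zero_iff z).2 (mem_coboundaries₂_of_mem_cocycleLifts_id hψ)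

theorem dim_H2_le_of_presentation_general {k G : Type u} [CommRing k] [Nontrivial k] [Group G]
    (A : Rep.{u} k G) [Module.Free k A] {α : Type*} {ι : Type u} [Fintype ι]
    (π : FreeGroup α →* G) (hπ : Function.Surjective π) (s : ι → FreeGroup α)
    (hker : π.ker = Subgroup.normalClosure (Set.range s)) :
    Module.rank k (groupCohomology A 2) ≤ Fintype.card ι * Module.rank k A :=
  (rank_H2_le_rank_pi A π hπ s hker).trans_eq rank_fun

/-- If a finite group `G` has a presentation (as the quotient of a free group by the
normal closure of a set of `r` relators), then `dim H²(G,M) ≤ r · dim M` for every prime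
`p` and every finite-dimensional `𝔽_p G`-module `M`. -/
theorem dim_H2_le_of_presentation
    (G : Type) [Group G] [Finite G] (α : Type) (π : FreeGroup α →* G)
    (hπ : Function.Surjective π) (r : ℕ) (S : Finset (FreeGroup α)) (hS : S.card = r)
    (hker : π.ker = Subgroup.normalClosure (S : Set (FreeGroup α)))
    (p : ℕ) (hp : p.Prime)
    (M : Type) [AddCommGroup M] [Module (ZMod p) M] [Module.Finite (ZMod p) M]
    (ρ : Representation (ZMod p) G M) :
    Module.finrank (ZMod p) (groupCohomology (Rep.of ρ) 2) ≤
      r * Module.finrank (ZMod p) M := by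
  have : Fact p.Prime := ⟨hp⟩
  have h := dim_H2_le_of_presentation_general (Rep.of ρ) π hπ ((↑) : S → FreeGroup α)
    (by simpa using hker)
  exact Module.finrank_le_of_rank_le (by simpa [hS, Module.finrank_eq_rank] using h)
end

section
/- Let G be a finite group generated by a finite subset D, and suppose G has a presentation with generator set X and finite relator set R. Then there is a surjective group homomorphism π from the free group on a set D′ with |D′| = |D| onto G, mapping the free basis D′ bijectively onto D, whose kernel is the normal closure of a set of at most |D| + |R| elements. In particular, G has a presentation with d(G) generators and at most d(G) + |R| relations, where d(G) is the minimum number of generators of G. -/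
/-!
Let `π : F(X) → G` be the given presentation and `p : F(I) → G` a surjection from another free
group. By freeness, `π` and `p` factor through each other: `p ∘ φ = π` and `π ∘ ψ = p`. The relators
`i⁻¹ φ(ψ(i))`, one for each `i ∈ I`, make `φ ∘ ψ` the identity modulo their normal closure, so that
`y` may be traded for `φ(ψ(y))`. If `p(y) = 1` then `ψ(y) ∈ ker π` is a consequence of `R`, and
`φ(ψ(y))` is a consequence of `φ(R)`. Hence these `|I|` relators together with `φ(R)` normally
generate `ker p`.
-/

section Group

variable {F F' G : Type*} [Group F] [Group F'] [Group G]

theorem inv_mul_apply_mem_of_closure_eq_top {N : Subgroup F} [N.Normal] {f : F →* F} {S : Set F}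
    (hS : Subgroup.closure S = ⊤) (hf : ∀ s ∈ S, s⁻¹ * f s ∈ N) (y : F) : y⁻¹ * f y ∈ N := by
  have mk_eq : QuotientGroup.mk' N = (QuotientGroup.mk' N).comp f :=
    MonoidHom.eq_of_eqOn_dense hS fun s hs => QuotientGroup.eq.2 (hf s hs)
  exact QuotientGroup.eq.1 (DFunLike.congr_fun mk_eq y)

theorem ker_eq_normalClosure_of_comp_eq {π : F →* G} {p : F' →* G} {φ : F →* F'} {ψ : F' →* F}
    (hφ : p.comp φ = π) (hψ : π.comp ψ = p) {R : Set F} (hR : π.ker = Subgroup.normalClosure R)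
    {S : Set F'} (hS : Subgroup.closure S = ⊤) :
    p.ker = Subgroup.normalClosure ((fun s => s⁻¹ * φ (ψ s)) '' S ∪ φ '' R) := by
  have p_φ (x : F) : p (φ x) = π x := DFunLike.congr_fun hφ x
  have π_ψ (y : F') : π (ψ y) = p y := DFunLike.congr_fun hψ y
  apply le_antisymm
  · intro y hy
    set N := Subgroup.normalClosure ((fun s => s⁻¹ * φ (ψ s)) '' S ∪ φ '' R)
    have y_congr : y⁻¹ * φ (ψ y) ∈ N :=
      inv_mul_apply_mem_of_closure_eq_top (f := φ.comp ψ) hS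
        (fun s hs => Subgroup.subset_normalClosure (.inl ⟨s, hs, rfl⟩)) y
    have ker_le : π.ker ≤ N.comap φ := by
      rw [hR]
      exact Subgroup.normalClosure_le_normal fun r hr =>
        Subgroup.subset_normalClosure (.inr ⟨r, hr, rfl⟩)
    have φψ_mem : φ (ψ y) ∈ N := ker_le ((π_ψ y).trans hy)
    exact inv_mem_iff.1 ((N.mul_mem_cancel_right φψ_mem).1 y_congr)
  · refine Subgroup.normalClosure_le_normal ?_
    rintro _ (⟨s, -, rfl⟩ | ⟨r, hr, rfl⟩)
    · change p (s⁻¹ * φ (ψ s)) = 1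
      rw [map_mul, map_inv, p_φ, π_ψ, inv_mul_cancel]
    · have r_mem : r ∈ π.ker := hR ▸ Subgroup.subset_normalClosure hr
      exact (p_φ r).trans r_mem

theorem exists_freeGroup_hom_comp_eq {X : Type*} {p : F →* G} (hp : Function.Surjective p)
    (f : FreeGroup X →* G) : ∃ φ : FreeGroup X →* F, p.comp φ = f := by
  choose v hv using fun x => hp (f (FreeGroup.of x))
  exact ⟨FreeGroup.lift v, by ext x; simp [hv]⟩

end Group

section Presentation

variable {G X : Type*} [Group G] {π : FreeGroup X →* G}

theorem exists_relators_card_le_of_surjective (hπ : Function.Surjective π)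
    {R : Finset (FreeGroup X)}
    (hR : π.ker = Subgroup.normalClosure (R : Set (FreeGroup X)))
    {I : Type*} [Finite I] {p : FreeGroup I →* G} (hp : Function.Surjective p) :
    ∃ R' : Finset (FreeGroup I), R'.card ≤ Nat.card I + R.card ∧
      p.ker = Subgroup.normalClosure (R' : Set (FreeGroup I)) := by
  classical
  have := Fintype.ofFinite I
  obtain ⟨φ, hφ⟩ := exists_freeGroup_hom_comp_eq hp π
  obtain ⟨ψ, hψ⟩ := exists_freeGroup_hom_comp_eq hπ p
  refine ⟨(Finset.univ.image FreeGroup.of).image (fun s => s⁻¹ * φ (ψ s)) ∪ R.image φ, ?_, ?_⟩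
  · have card_of : (Finset.univ.image (FreeGroup.of (α := I))).card ≤ Nat.card I :=
      Finset.card_image_le.trans_eq Nat.card_eq_fintype_card.symm
    exact (Finset.card_union_le _ _).trans
      (add_le_add (Finset.card_image_le.trans card_of) Finset.card_image_le)
  · simpa only [Finset.coe_union, Finset.coe_image, Finset.coe_univ, Set.image_univ] using
      ker_eq_normalClosure_of_comp_eq hφ hψ hR (FreeGroup.closure_range_of I)

theorem presentation_on_given_generators_general [Group.FG G] (D : Finset G)
    (hD : Subgroup.closure (D : Set G) = ⊤) (hπ : Function.Surjective π) (R : Finset (FreeGroup X))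
    (hker : π.ker = Subgroup.normalClosure (R : Set (FreeGroup X))) :
    (∃ π' : FreeGroup {x : G // x ∈ D} →* G,
      (∀ d : {x : G // x ∈ D}, π' (FreeGroup.of d) = (d : G)) ∧
      Function.Surjective π' ∧
      ∃ R' : Finset (FreeGroup {x : G // x ∈ D}),
        R'.card ≤ D.card + R.card ∧
        π'.ker = Subgroup.normalClosure (R' : Set (FreeGroup {x : G // x ∈ D}))) ∧
    (∃ π₂ : FreeGroup (Fin (Group.rank G)) →* G,
      Function.Surjective π₂ ∧
      ∃ R₂ : Finset (FreeGroup (Fin (Group.rank G))),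
        R₂.card ≤ Group.rank G + R.card ∧
        π₂.ker = Subgroup.normalClosure (R₂ : Set (FreeGroup (Fin (Group.rank G))))) := by
  constructor
  · have lift_surjective : Function.Surjective (FreeGroup.lift ((↑) : {x : G // x ∈ D} → G)) :=
      FreeGroup.lift_surjective_iff_closure_range_eq_top.2 (by simpa using hD)
    refine ⟨_, fun _ => FreeGroup.lift_apply_of, lift_surjective, ?_⟩
    simpa using exists_relators_card_le_of_surjective hπ hker lift_surjective
  · obtain ⟨S, S_card, S_closure⟩ := Group.rank_spec G
    let e := S.equivFinOfCardEq S_card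
    have lift_surjective : Function.Surjective (FreeGroup.lift (((↑) : S → G) ∘ e.symm)) := by
      rw [FreeGroup.lift_surjective_iff_closure_range_eq_top, e.symm.surjective.range_comp]
      simpa using S_closure
    refine ⟨_, lift_surjective, ?_⟩
    simpa using exists_relators_card_le_of_surjective hπ hker lift_surjective

end Presentation

/-- If a finite group `G` is generated by a finite subset `D` and has a presentation with
generator set `X` and finite relator set `R`, then `G` has a presentation on the free
group over `D` (mapping the free basis identically onto `D`) whose kernel is the normal
closure of at most `|D| + |R|` elements.  In particular, `G` has a presentation with
`d(G)` generators and at most `d(G) + |R|` relations. -/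
theorem presentation_on_given_generators
    (G : Type) [Group G] [Finite G] (D : Finset G)
    (hD : Subgroup.closure (D : Set G) = ⊤)
    (X : Type) (π : FreeGroup X →* G) (hπ : Function.Surjective π)
    (R : Finset (FreeGroup X))
    (hker : π.ker = Subgroup.normalClosure (R : Set (FreeGroup X))) :
    (∃ π' : FreeGroup {x : G // x ∈ D} →* G,
      (∀ d : {x : G // x ∈ D}, π' (FreeGroup.of d) = (d : G)) ∧
      Function.Surjective π' ∧
      ∃ R' : Finset (FreeGroup {x : G // x ∈ D}),
        R'.card ≤ D.card + R.card ∧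
        π'.ker = Subgroup.normalClosure (R' : Set (FreeGroup {x : G // x ∈ D}))) ∧
    (∃ π₂ : FreeGroup (Fin (Group.rank G)) →* G,
      Function.Surjective π₂ ∧
      ∃ R₂ : Finset (FreeGroup (Fin (Group.rank G))),
        R₂.card ≤ Group.rank G + R.card ∧
        π₂.ker = Subgroup.normalClosure (R₂ : Set (FreeGroup (Fin (Group.rank G))))) :=
  presentation_on_given_generators_general D hD hπ R hker
end

section
/- Suppose a group G has a presentation with finite generator set X and finite nonempty relator set R of total length L (the sum of the reduced word lengths of the elements of R). Let Ĝ be a perfect group with a central subgroup Z of prime order p such that Ĝ/Z ≅ G (i.e., there is a surjective homomorphism Ĝ → G with kernel Z contained in the center of Ĝ). Then Ĝ has a presentation with a generator set X̂ of cardinality |X| + 1 and a relator set R̂ of cardinality |X| + |R| + 1, whose total length is at most 4|X| + 2L + p|R|, and such that one of the generators in X̂ is sent by the presentation map to a generator of Z. -/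
/-!
Lift a presentation `π : F(X) → G` to `ψ : F(X) → Ĝ`, so that `ψ r = z ^ a r` for every relator
`r`, where `z` generates the kernel `Z` of `Ĝ → G`. Adding a letter `ζ` for `z`, the relators
`ζ ^ p`, `⁅x, ζ⁆` and `r * ζ ^ (-a r)` present `Ĝ`: modulo them `ζ` is central, so a word that dies
in `G` is congruent to a power of `ζ`, and `ζ` has no larger order than `z`.

With `0 ≤ a r < p` the length is at most `p + 4|X| + L + ∑ a r`. To save the extra `p`, fix a
relator `r₀` and choose `z` with `ψ r₀ ∈ {1, z}`, which is possible because every nontrivial element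
of `Z` is a generator. Then `a r₀ ≤ 1`, and `a r₀ = 0` if `r₀` is the empty word, so
`a r₀ ≤ |r₀| ≤ L`.
-/

open scoped commutatorElement

section FreeGroupWords

variable {α β : Type*} [DecidableEq α]

lemma freeGroup_norm_map_le [DecidableEq β] (f : α → β) (w : FreeGroup α) :
    (FreeGroup.map f w).norm ≤ w.norm := by
  conv_lhs => rw [← FreeGroup.mk_toWord (x := w), FreeGroup.map.mk]
  exact FreeGroup.norm_mk_le.trans_eq (List.length_map _)

lemma freeGroup_toWord_commutator_of {x y : α} (hxy : x ≠ y) :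
    ⁅FreeGroup.of x, FreeGroup.of y⁆.toWord =
      [(x, true), (y, true), (x, false), (y, false)] := by
  simp [commutatorElement_def, FreeGroup.toWord_mul, FreeGroup.toWord_inv, FreeGroup.invRev,
    FreeGroup.reduce.cons, hxy, hxy.symm]

end FreeGroupWords

lemma normal_of_le_center {E : Type*} [Group E] {H : Subgroup E} (hH : H ≤ Subgroup.center E) :
    H.Normal :=
  ⟨fun h hh g ↦ by rwa [Subgroup.mem_center_iff.mp (hH hh) g, mul_inv_cancel_right]⟩

lemma exists_lift_freeGroup {X G E : Type*} [Group G] [Group E] {φ : E →* G}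
    (hφ : Function.Surjective φ) (π : FreeGroup X →* G) : ∃ ψ : FreeGroup X →* E, φ.comp ψ = π :=
  ⟨FreeGroup.lift fun x ↦ (hφ (π (.of x))).choose, by
    ext x
    simpa using (hφ (π (.of x))).choose_spec⟩

section PrimeOrder

variable {E ι : Type*} [Group E] {K : Subgroup E}

lemma zpowers_eq_of_prime_card (hK : (Nat.card K).Prime) {z : E} (hzK : z ∈ K) (hz : z ≠ 1) :
    Subgroup.zpowers z = K := by
  have := Fact.mk hK
  have htop : Subgroup.zpowers (⟨z, hzK⟩ : K) = ⊤ :=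
    zpowers_eq_top_of_prime_card rfl (by simpa [Subtype.ext_iff] using hz)
  simpa [MonoidHom.map_zpowers, ← MonoidHom.range_eq_map] using
    congrArg (Subgroup.map K.subtype) htop

lemma exists_zpowers_eq_and_eq_one_or_eq (hK : (Nat.card K).Prime) {c : E} (hc : c ∈ K) :
    ∃ z, Subgroup.zpowers z = K ∧ (c = 1 ∨ c = z) := by
  by_cases hc1 : c = 1
  · have hbot : K ≠ ⊥ := by
      rintro rfl
      simp [Nat.not_prime_one] at hK
    obtain ⟨z, hzK, hz⟩ := K.bot_or_exists_ne_one.resolve_left hbot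
    exact ⟨z, zpowers_eq_of_prime_card hK hzK hz, .inl hc1⟩
  · exact ⟨c, zpowers_eq_of_prime_card hK hc hc1, .inr rfl⟩

lemma eq_zero_of_pow_eq_one_of_lt_orderOf {z : E} {n : ℕ} (hn : n < orderOf z)
    (hz : z ^ n = 1) : n = 0 :=
  Nat.eq_zero_of_dvd_of_lt (orderOf_dvd_of_pow_eq_one hz) hn

lemma exists_zpowers_eq_and_pow_eq (hK : (Nat.card K).Prime) {c : ι → E} (hc : ∀ i, c i ∈ K)
    (i₀ : ι) :
    ∃ (z : E) (a : ι → ℕ), Subgroup.zpowers z = K ∧ (∀ i, c i = z ^ a i) ∧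
      (∀ i, a i < orderOf z) ∧ a i₀ ≤ 1 := by
  obtain ⟨z, rfl, hz⟩ := exists_zpowers_eq_and_eq_one_or_eq hK (hc i₀)
  rw [Nat.card_zpowers] at hK
  have hfin : IsOfFinOrder z := orderOf_pos_iff.mp hK.pos
  have hexp (i) : ∃ n < orderOf z, z ^ n = c i := by
    classical simpa using hfin.mem_zpowers_iff_mem_range_orderOf.mp (hc i)
  choose a ha hza using hexp
  refine ⟨z, a, rfl, fun i ↦ (hza i).symm, ha, ?_⟩
  rcases hz with hone | hgen
  · rw [eq_zero_of_pow_eq_one_of_lt_orderOf (ha i₀) ((hza i₀).trans hone)]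
    exact zero_le_one
  · refine (pow_injOn_Iio_orderOf (ha i₀) hK.one_lt ?_).le
    simpa using (hza i₀).trans hgen

end PrimeOrder

/-- `π : F(α) → G` presents `G` with generators `α` and the family of relators `r`. -/
structure IsPresentation {α ι G : Type*} [Group G] (π : FreeGroup α →* G)
    (r : ι → FreeGroup α) : Prop where
  surjective : Function.Surjective π
  ker_eq : π.ker = Subgroup.normalClosure (Set.range r)

lemma IsPresentation.congr {α β ι G : Type*} [Group G] {π : FreeGroup α →* G}
    {r : ι → FreeGroup α} (h : IsPresentation π r) (e : α ≃ β) :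
    IsPresentation (π.comp (FreeGroup.map e.symm)) (FreeGroup.map e ∘ r) where
  surjective := h.surjective.comp (FreeGroup.freeGroupCongr e.symm).surjective
  ker_eq := by
    rw [← MonoidHom.comap_ker, h.ker_eq, Set.range_comp]
    exact (Subgroup.comap_equiv_eq_map_symm (FreeGroup.freeGroupCongr e.symm) _).trans
      (Subgroup.map_normalClosure _ _ (FreeGroup.freeGroupCongr e).surjective)

section OptionLift

variable {X G E : Type*} [Group G] [Group E]

/-- The extension of `ψ : F(X) → E` to one further letter `none`, which is sent to `z`. -/
def optionLift (ψ : FreeGroup X →* E) (z : E) : FreeGroup (Option X) →* E :=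
  FreeGroup.lift fun o ↦ o.elim z fun x ↦ ψ (.of x)

@[simp]
lemma optionLift_of_none (ψ : FreeGroup X →* E) (z : E) : optionLift ψ z (.of none) = z := by
  simp [optionLift]

@[simp]
lemma optionLift_of_some (ψ : FreeGroup X →* E) (z : E) (x : X) :
    optionLift ψ z (.of (some x)) = ψ (.of x) := by
  simp [optionLift]

@[simp]
lemma optionLift_map_some (ψ : FreeGroup X →* E) (z : E) (w : FreeGroup X) :
    optionLift ψ z (.map some w) = ψ w := by
  suffices (optionLift ψ z).comp (FreeGroup.map some) = ψ from DFunLike.congr_fun this w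
  ext x
  simp

lemma comp_optionLift (f : E →* G) (ψ : FreeGroup X →* E) (z : E) :
    f.comp (optionLift ψ z) = optionLift (f.comp ψ) (f z) := by
  ext (_ | x) <;> simp

lemma ker_optionLift_one_le {π : FreeGroup X →* G} {S : Set (FreeGroup X)}
    (hπ : π.ker = Subgroup.normalClosure S) {M : Subgroup (FreeGroup (Option X))} [M.Normal]
    (hnone : .of none ∈ M) (hS : ∀ r ∈ S, .map some r ∈ M) : (optionLift π 1).ker ≤ M := by
  intro w hw
  have hker : π.ker ≤ M.comap (FreeGroup.map some) :=
    hπ ▸ Subgroup.normalClosure_le_normal hS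
  have herase : (QuotientGroup.mk' M).comp ((FreeGroup.map some).comp (optionLift (.id _) 1)) =
      QuotientGroup.mk' M := by
    ext (_ | x)
    · simpa using ((QuotientGroup.eq_one_iff _).mpr hnone).symm
    · simp
  have hmem : FreeGroup.map some (optionLift (.id _) 1 w) ∈ M := by
    apply hker
    rw [MonoidHom.mem_ker, ← MonoidHom.comp_apply, comp_optionLift, MonoidHom.comp_id, map_one]
    exact hw
  rw [← QuotientGroup.ker_mk' M, MonoidHom.mem_ker, ← herase]
  exact (QuotientGroup.eq_one_iff _).mpr hmem

lemma optionLift_surjective {φ : E →* G} {ψ : FreeGroup X →* E} {z : E}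
    (hψ : Function.Surjective (φ.comp ψ)) (hz : φ.ker ≤ Subgroup.zpowers z) :
    Function.Surjective (optionLift ψ z) := by
  intro g
  obtain ⟨w, hw⟩ := hψ (φ g)
  have hmem : (ψ w)⁻¹ * g ∈ φ.ker := by
    rw [MonoidHom.mem_ker, map_mul, map_inv, ← hw, MonoidHom.comp_apply, inv_mul_cancel]
  obtain ⟨k, hk⟩ := Subgroup.mem_zpowers_iff.mp (hz hmem)
  exact ⟨.map some w * .of none ^ k, by simp [hk]⟩

end OptionLift

section Relators

variable {X ι G E : Type*} [Group G] [Group E]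

/-- The relators of a central extension with kernel of order `n`: the letter `none` stands for a
generator of the kernel, and `a i` is the exponent of that generator in the value of the old relator
`r i` on lifted generators. -/
def centralExtensionRelator (n : ℕ) (r : ι → FreeGroup X) (a : ι → ℕ) :
    Option (X ⊕ ι) → FreeGroup (Option X)
  | none => .of none ^ n
  | some (.inl x) => ⁅FreeGroup.of (some x), FreeGroup.of none⁆
  | some (.inr i) => .map some (r i) * (.of none ^ a i)⁻¹

variable {n : ℕ} {r : ι → FreeGroup X} {a : ι → ℕ}

lemma centralExtensionRelator_injective (hr : Function.Injective r) (hn : n ≠ 0)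
    (ha : ∀ i, r i = 1 → a i = 0) : Function.Injective (centralExtensionRelator n r a) := by
  classical
  have hcomm (x : X) := freeGroup_toWord_commutator_of (Option.some_ne_none x)
  have hcomm_ne (x : X) : ⁅FreeGroup.of (some x), FreeGroup.of none⁆ ≠ 1 :=
    FreeGroup.toWord_eq_nil_iff.not.mp (hcomm x ▸ List.cons_ne_nil _ _)
  have hpow_ne : (FreeGroup.of none : FreeGroup (Option X)) ^ n ≠ 1 :=
    FreeGroup.norm_eq_zero.not.mp ((FreeGroup.norm_of_pow _ n).trans_ne hn)
  have hne_lift {t} (ht : t ≠ 1) (herase : optionLift (.id _) 1 t = 1) (i : ι) :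
      t ≠ centralExtensionRelator n r a (some (.inr i)) := by
    intro h
    have hri : r i = 1 := by simpa [h, centralExtensionRelator] using herase
    exact ht (by simp [h, centralExtensionRelator, hri, ha i hri])
  have herase_comm (x : X) :
      optionLift (.id (FreeGroup X)) 1 ⁅FreeGroup.of (some x), FreeGroup.of none⁆ = 1 := by
    simp [map_commutatorElement]
  refine Option.injective_iff.mpr ⟨?_, ?_⟩
  · rintro (x | i) (y | j) h
    · simpa [hcomm, centralExtensionRelator] using congrArg FreeGroup.toWord h
    · exact (hne_lift (hcomm_ne x) (herase_comm x) j h).elim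
    · exact (hne_lift (hcomm_ne y) (herase_comm y) i h.symm).elim
    · have hrij : r i = r j := by
        simpa [centralExtensionRelator] using congrArg (optionLift (.id _) 1) h
      rw [hr hrij]
  · rintro ⟨x | i, h⟩
    · have hwords := (hcomm x).symm.trans (congrArg FreeGroup.toWord h)
      simp [centralExtensionRelator, List.eq_replicate_iff] at hwords
    · exact hne_lift hpow_ne (by simp) i h.symm

lemma sum_norm_centralExtensionRelator_le [Fintype X] [Fintype ι] [DecidableEq X] :
    ∑ t, (centralExtensionRelator n r a t).norm ≤
      n + 4 * Fintype.card X + (∑ i, (r i).norm + ∑ i, a i) := by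
  have hcomm (x : X) : (centralExtensionRelator n r a (some (.inl x))).norm = 4 :=
    congrArg List.length (freeGroup_toWord_commutator_of (Option.some_ne_none x))
  have hlift (i : ι) : (centralExtensionRelator n r a (some (.inr i))).norm ≤
      (r i).norm + a i := by
    refine (FreeGroup.norm_mul_le _ _).trans (add_le_add (freeGroup_norm_map_le _ _) ?_)
    rw [FreeGroup.norm_inv_eq, FreeGroup.norm_of_pow]
  calc ∑ t, (centralExtensionRelator n r a t).norm
      = n + (4 * Fintype.card X +
          ∑ i, (centralExtensionRelator n r a (some (.inr i))).norm) := by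
        simp only [Fintype.sum_option, Fintype.sum_sum_type, hcomm]
        simp [centralExtensionRelator, mul_comm]
    _ ≤ n + (4 * Fintype.card X + ∑ i, ((r i).norm + a i)) := by gcongr; exact hlift _
    _ = n + 4 * Fintype.card X + (∑ i, (r i).norm + ∑ i, a i) := by
        rw [Finset.sum_add_distrib, add_assoc]

lemma apply_of_none_mem_center {q : FreeGroup (Option X) →* E} (hsurj : Function.Surjective q)
    (hq : ∀ t, q (centralExtensionRelator n r a t) = 1) : q (.of none) ∈ Subgroup.center E := by
  rw [Subgroup.mem_center_iff, hsurj.forall]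
  suffices (MulAut.conj (q (.of none))).toMonoidHom.comp q = q from fun w ↦
    (mul_inv_eq_iff_eq_mul.mp (DFunLike.congr_fun this w)).symm
  ext (_ | x)
  · simp
  · have hcomm := hq (some (.inl x))
    rw [centralExtensionRelator, map_commutatorElement, commutatorElement_eq_one_iff_mul_comm]
      at hcomm
    simp [← hcomm]

lemma apply_mem_zpowers_of_mem_ker {π : FreeGroup X →* G}
    (hπ : π.ker = Subgroup.normalClosure (Set.range r)) {q : FreeGroup (Option X) →* E}
    (hsurj : Function.Surjective q) (hq : ∀ t, q (centralExtensionRelator n r a t) = 1)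
    {w : FreeGroup (Option X)} (hw : w ∈ (optionLift π 1).ker) :
    q w ∈ Subgroup.zpowers (q (.of none)) := by
  have hcenter := apply_of_none_mem_center hsurj hq
  have : (Subgroup.zpowers (q (.of none))).Normal :=
    normal_of_le_center (Subgroup.zpowers_le.mpr hcenter)
  refine ker_optionLift_one_le (M := (Subgroup.zpowers (q (.of none))).comap q) hπ
    (Subgroup.mem_zpowers _) ?_ hw
  rintro _ ⟨i, rfl⟩
  have hrel := hq (some (.inr i))
  rw [centralExtensionRelator, map_mul, map_inv, map_pow, mul_inv_eq_one] at hrel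
  rw [Subgroup.mem_comap, hrel]
  exact Subgroup.npow_mem_zpowers _ _

lemma optionLift_centralExtensionRelator {ψ : FreeGroup X →* E} {z : E}
    (hz : z ∈ Subgroup.center E) (ha : ∀ i, ψ (r i) = z ^ a i) (t : Option (X ⊕ ι)) :
    optionLift ψ z (centralExtensionRelator (orderOf z) r a t) = 1 := by
  rcases t with _ | x | i
  · simp [centralExtensionRelator, pow_orderOf_eq_one]
  · rw [centralExtensionRelator, map_commutatorElement, optionLift_of_none,
      commutatorElement_eq_one_iff_mul_comm]
    exact Subgroup.mem_center_iff.mp hz _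
  · simp [centralExtensionRelator, ha]

lemma ker_optionLift_eq {φ : E →* G} {ψ : FreeGroup X →* E} {z : E}
    (hker : (φ.comp ψ).ker = Subgroup.normalClosure (Set.range r)) (hφz : φ z = 1)
    (hz : z ∈ Subgroup.center E) (ha : ∀ i, ψ (r i) = z ^ a i) :
    (optionLift ψ z).ker =
      Subgroup.normalClosure (Set.range (centralExtensionRelator (orderOf z) r a)) := by
  set N := Subgroup.normalClosure (Set.range (centralExtensionRelator (orderOf z) r a))
  have hrel (t) : (centralExtensionRelator (orderOf z) r a t : _ ⧸ N) = 1 :=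
    (QuotientGroup.eq_one_iff _).mpr (Subgroup.subset_normalClosure (Set.mem_range_self t))
  have hN : N ≤ (optionLift ψ z).ker := Subgroup.normalClosure_le_normal <|
    Set.range_subset_iff.mpr (optionLift_centralExtensionRelator hz ha)
  refine le_antisymm (fun w hw ↦ ?_) hN
  have hwG : w ∈ (optionLift (φ.comp ψ) 1).ker := by
    rw [← hφz, ← comp_optionLift, MonoidHom.mem_ker, MonoidHom.comp_apply, hw, map_one]
  obtain ⟨k, hk⟩ := Subgroup.mem_zpowers_iff.mp
    (apply_mem_zpowers_of_mem_ker hker (QuotientGroup.mk'_surjective N) hrel hwG)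
  have hkN : w⁻¹ * .of none ^ k ∈ N := QuotientGroup.eq.mp hk.symm
  have hzk : z ^ k = 1 := by simpa [MonoidHom.mem_ker.mp hw] using hN hkN
  obtain ⟨d, rfl⟩ := orderOf_dvd_iff_zpow_eq_one.mpr hzk
  have hpow : (FreeGroup.of none : FreeGroup (Option X)) ^ ((orderOf z : ℤ) * d) ∈ N := by
    rw [zpow_mul, zpow_natCast]
    exact zpow_mem (Subgroup.subset_normalClosure (Set.mem_range_self none)) d
  exact inv_mem_iff.mp ((mul_mem_cancel_right hpow).mp hkN)

theorem IsPresentation.centralExtension {φ : E →* G} {ψ : FreeGroup X →* E} {z : E}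
    (h : IsPresentation (φ.comp ψ) r) (hz : Subgroup.zpowers z = φ.ker)
    (hcentral : φ.ker ≤ Subgroup.center E) (ha : ∀ i, ψ (r i) = z ^ a i) :
    IsPresentation (optionLift ψ z) (centralExtensionRelator (orderOf z) r a) :=
  have hzker : z ∈ φ.ker := hz ▸ Subgroup.mem_zpowers z
  ⟨optionLift_surjective h.surjective hz.ge, ker_optionLift_eq h.ker_eq hzker (hcentral hzker) ha⟩

end Relators

lemma add_sum_le_mul_card_add {ι : Type*} [Fintype ι] {n m : ℕ} {a : ι → ℕ}
    (ha : ∀ i, a i ≤ n) {i₀ : ι} (hi₀ : a i₀ ≤ m) :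
    n + ∑ i, a i ≤ n * Fintype.card ι + m := by
  classical
  calc n + ∑ i, a i = a i₀ + (n + ∑ i ∈ Finset.univ.erase i₀, a i) := by
        rw [← Finset.add_sum_erase _ a (Finset.mem_univ i₀), add_left_comm]
    _ ≤ m + (n + ∑ _i ∈ Finset.univ.erase i₀, n) := by gcongr; exact ha _
    _ = m + ∑ _i : ι, n := by rw [Finset.add_sum_erase _ (fun _ ↦ n) (Finset.mem_univ i₀)]
    _ = n * Fintype.card ι + m := by simp [mul_comm, add_comm]

theorem IsPresentation.exists_centralExtension {X ι G E : Type*} [Group G] [Group E] [Fintype X]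
    [DecidableEq X] [Fintype ι] [Nonempty ι] {π : FreeGroup X →* G} {r : ι → FreeGroup X}
    (h : IsPresentation π r) (hr : Function.Injective r) {φ : E →* G}
    (hφ : Function.Surjective φ) (hcentral : φ.ker ≤ Subgroup.center E)
    (hp : (Nat.card φ.ker).Prime) :
    ∃ (πhat : FreeGroup (Option X) →* E) (rhat : Option (X ⊕ ι) → FreeGroup (Option X)),
      IsPresentation πhat rhat ∧ Function.Injective rhat ∧
      ∑ t, (rhat t).norm ≤
        4 * Fintype.card X + 2 * ∑ i, (r i).norm + Nat.card φ.ker * Fintype.card ι ∧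
      Subgroup.zpowers (πhat (.of none)) = φ.ker := by
  obtain ⟨ψ, rfl⟩ := exists_lift_freeGroup hφ π
  have hψ (i) : ψ (r i) ∈ φ.ker := by
    rw [MonoidHom.mem_ker, ← MonoidHom.comp_apply, ← MonoidHom.mem_ker, h.ker_eq]
    exact Subgroup.subset_normalClosure (Set.mem_range_self i)
  obtain ⟨i₀⟩ := ‹Nonempty ι›
  obtain ⟨z, a, hz, ha, halt, ha₀⟩ := exists_zpowers_eq_and_pow_eq hp hψ i₀
  have hcard : Nat.card φ.ker = orderOf z := by rw [← hz, Nat.card_zpowers]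
  have ha_one (i) (hi : r i = 1) : a i = 0 :=
    eq_zero_of_pow_eq_one_of_lt_orderOf (halt i) (by rw [← ha, hi, map_one])
  have ha₀_norm : a i₀ ≤ ∑ i, (r i).norm := by
    refine le_trans ?_ (Finset.single_le_sum (fun _ _ ↦ zero_le) (Finset.mem_univ i₀))
    by_cases hi₀ : r i₀ = 1
    · exact (ha_one i₀ hi₀).trans_le zero_le
    · exact ha₀.trans (Nat.one_le_iff_ne_zero.mpr (FreeGroup.norm_eq_zero.not.mpr hi₀))
  refine ⟨optionLift ψ z, centralExtensionRelator (orderOf z) r a,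
    h.centralExtension hz hcentral ha,
    centralExtensionRelator_injective hr (hcard ▸ hp.ne_zero) ha_one, ?_, by simpa using hz⟩
  have hlength := sum_norm_centralExtensionRelator_le (n := orderOf z) (r := r) (a := a)
  have hexponents := add_sum_le_mul_card_add (fun i ↦ (halt i).le) ha₀_norm
  rw [hcard]
  omega

theorem presentation_of_central_extension_general
    {G : Type*} [Group G] {X : Type*} [Fintype X] [DecidableEq X]
    {π : FreeGroup X →* G} (hπ : Function.Surjective π)
    {R : Finset (FreeGroup X)} (hR : R.Nonempty)
    (hker : π.ker = Subgroup.normalClosure (R : Set (FreeGroup X)))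
    {E : Type*} [Group E] {φ : E →* G} (hφ : Function.Surjective φ)
    (hcentral : φ.ker ≤ Subgroup.center E) (hp : (Nat.card φ.ker).Prime) :
    ∃ (πhat : FreeGroup (Fin (Fintype.card X + 1)) →* E)
      (Rhat : Finset (FreeGroup (Fin (Fintype.card X + 1)))),
      Function.Surjective πhat ∧
      Rhat.card = Fintype.card X + R.card + 1 ∧
      πhat.ker = Subgroup.normalClosure (Rhat : Set (FreeGroup (Fin (Fintype.card X + 1)))) ∧
      (∑ r ∈ Rhat, FreeGroup.norm r) ≤
        4 * Fintype.card X + 2 * ∑ r ∈ R, FreeGroup.norm r + Nat.card φ.ker * R.card ∧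
      ∃ x : Fin (Fintype.card X + 1),
        Subgroup.zpowers (πhat (FreeGroup.of x)) = φ.ker := by
  have : Nonempty R := hR.to_subtype
  have hpres : IsPresentation π (Subtype.val : R → FreeGroup X) := ⟨hπ, by simpa using hker⟩
  obtain ⟨πhat, rhat, hhat, hinj, hlength, hgen⟩ :=
    hpres.exists_centralExtension Subtype.val_injective hφ hcentral hp
  let e : Option X ≃ Fin (Fintype.card X + 1) := Fintype.equivFinOfCardEq Fintype.card_option
  have hhat' := hhat.congr e
  have hinj' := (FreeGroup.freeGroupCongr e).injective.comp hinj
  refine ⟨πhat.comp (FreeGroup.map e.symm), Finset.univ.map ⟨_, hinj'⟩, hhat'.surjective,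
    ?_, ?_, ?_, e none, by simpa using hgen⟩
  · simp
  · simpa [Function.comp_def] using hhat'.ker_eq
  · calc ∑ r ∈ Finset.univ.map ⟨_, hinj'⟩, r.norm
        = ∑ t, (FreeGroup.map e (rhat t)).norm := Finset.sum_map _ _ _
      _ ≤ ∑ t, (rhat t).norm := Finset.sum_le_sum fun t _ ↦ freeGroup_norm_map_le _ _
      _ ≤ 4 * Fintype.card X + 2 * ∑ r ∈ R, r.norm + Nat.card φ.ker * R.card := by
        simpa only [Finset.sum_coe_sort R FreeGroup.norm, Fintype.card_coe] using hlength

/-- Given a presentation of `G` with finite generator set `X` and finite nonempty relator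
set `R` of total length `L`, any perfect central extension `Ĝ` of `G` by a group of prime
order `p` has a presentation with `|X| + 1` generators and `|X| + |R| + 1` relators of
total length at most `4|X| + 2L + p|R|`, in which one generator maps to a generator of
the (central) kernel. -/
theorem presentation_of_central_extension
    (G : Type) [Group G] (X : Type) [Fintype X] [DecidableEq X]
    (π : FreeGroup X →* G) (hπ : Function.Surjective π)
    (R : Finset (FreeGroup X)) (hR : R.Nonempty)
    (hker : π.ker = Subgroup.normalClosure (R : Set (FreeGroup X)))
    (L : ℕ) (hL : L = ∑ r ∈ R, FreeGroup.norm r)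
    (Ghat : Type) [Group Ghat] (hperf : commutator Ghat = ⊤)
    (p : ℕ) (hp : p.Prime)
    (φ : Ghat →* G) (hφ : Function.Surjective φ)
    (hcentral : φ.ker ≤ Subgroup.center Ghat)
    (hp' : Nat.card φ.ker = p) :
    ∃ (πhat : FreeGroup (Fin (Fintype.card X + 1)) →* Ghat)
      (Rhat : Finset (FreeGroup (Fin (Fintype.card X + 1)))),
      Function.Surjective πhat ∧
      Rhat.card = Fintype.card X + R.card + 1 ∧
      πhat.ker = Subgroup.normalClosure (Rhat : Set (FreeGroup (Fin (Fintype.card X + 1)))) ∧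
      (∑ r ∈ Rhat, FreeGroup.norm r) ≤ 4 * Fintype.card X + 2 * L + p * R.card ∧
      ∃ x : Fin (Fintype.card X + 1),
        Subgroup.zpowers (πhat (FreeGroup.of x)) = φ.ker := by
  subst hL hp'
  exact presentation_of_central_extension_general hπ hR hker hφ hcentral hp
end

section
/- Let p > 3 be a prime, let j be an integer with 1 ≤ j ≤ p − 1 whose residue generates the multiplicative group (ℤ/pℤ)ˣ, and let j̄ and 2̄ be the integers in [1, p] with j·j̄ ≡ 1 (mod p) and 2·2̄ ≡ 1 (mod p). Then the group presented by generators u, h₂, h, t subject to the eight relations u^p = 1, u^{h₂} = u⁴, u^{h} = u^{j²}, t² = 1, h^t = h⁻¹, t = u·u^t·u, h₂·t = u^{2̄}·(u²)^t·u^{2̄}, and h·t = u^{j̄}·(u^{j})^t·u^{j̄}, is isomorphic to PSL(2, F_p), via the map sending u, h₂, h, t to the images in PSL(2, F_p) of the matrices [[1,1],[0,1]], [[2̄,0],[0,2]], [[j̄,0],[0,j]], [[0,1],[−1,0]] respectively. -/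
/-- The four generators `u, h₂, h, t` of the presentation of `PSL(2, p)`. -/
inductive PSLGen : Type
  | u : PSLGen
  | h2 : PSLGen
  | h : PSLGen
  | t : PSLGen

open FreeGroup in
/-- The eight relators of the presentation of `PSL(2, p)`:
`u^p`, `u^{h₂} = u⁴`, `u^{h} = u^{j²}`, `t² = 1`, `h^t = h⁻¹`, `t = u·uᵗ·u`,
`h₂·t = u^{2̄}·(u²)ᵗ·u^{2̄}` and `h·t = u^{j̄}·(uʲ)ᵗ·u^{j̄}`. -/
def pslRels (p j jb tb : ℕ) : Set (FreeGroup PSLGen) :=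
  { of PSLGen.u ^ p,
    (of PSLGen.h2)⁻¹ * of PSLGen.u * of PSLGen.h2 * (of PSLGen.u ^ 4)⁻¹,
    (of PSLGen.h)⁻¹ * of PSLGen.u * of PSLGen.h * (of PSLGen.u ^ (j ^ 2))⁻¹,
    of PSLGen.t ^ 2,
    (of PSLGen.t)⁻¹ * of PSLGen.h * of PSLGen.t * of PSLGen.h,
    of PSLGen.u * ((of PSLGen.t)⁻¹ * of PSLGen.u * of PSLGen.t) * of PSLGen.u *
      (of PSLGen.t)⁻¹,
    of PSLGen.u ^ tb * ((of PSLGen.t)⁻¹ * of PSLGen.u ^ 2 * of PSLGen.t) *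
      of PSLGen.u ^ tb * (of PSLGen.h2 * of PSLGen.t)⁻¹,
    of PSLGen.u ^ jb * ((of PSLGen.t)⁻¹ * of PSLGen.u ^ j * of PSLGen.t) *
      of PSLGen.u ^ jb * (of PSLGen.h * of PSLGen.t)⁻¹ }


/-! The relations force `G = U⟨h⟩ ∪ U⟨h⟩tU`, where `U` is the subgroup of powers of `u`. The crucial
point is a Bruhat relation `t⁻¹ u(x) t = u(-x⁻¹) hⁿ t u(-x⁻¹)` for every nonzero `x = ± jⁿ`: the
relations give it for `n = 0` and `n = 1`, conjugation by `hᵐ` carries it from `n` to `n + 2m`, and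
inversion takes care of the sign. Comparing it at `x = 1` for two exponents also shows `hᵏ = 1` as
soon as `jᵏ = ± 1`. These are the only coincidences among Bruhat normal forms in `PSL(2, 𝔽_p)`, so
the map from `G` is injective. -/

open Matrix.SpecialLinearGroup
open scoped MatrixGroups

/-- The relations between the one-parameter group `root x = [[1, x], [0, 1]]`, the torus element
`h = [[j⁻¹, 0], [0, j]]` and the Weyl element `t = [[0, 1], [-1, 0]]` of `PSL(2, R)`, imposed on
elements of an abstract group. -/
structure SteinbergRelations {R G : Type*} [CommRing R] [Group G] (j : Rˣ) (root : R → G)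
    (h t : G) : Prop where
  root_add (x y : R) : root (x + y) = root x * root y
  root_conj (x : R) : h⁻¹ * root x * h = root (j ^ 2 * x)
  weyl_sq : t ^ 2 = 1
  torus_conj : t⁻¹ * h * t = h⁻¹
  weyl_eq : root 1 * (t⁻¹ * root 1 * t) * root 1 = t
  torus_mul_weyl_eq : root ↑j⁻¹ * (t⁻¹ * root j * t) * root ↑j⁻¹ = h * t

/-- The union of the Bruhat cells `U⟨h⟩` and `U⟨h⟩tU`, where `U` is the range of `root`. -/
def bruhatCells {R G : Type*} [Group G] (root : R → G) (h t : G) : Set G :=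
  {g | ∃ a, ∃ k : ℤ, g = root a * h ^ k} ∪ {g | ∃ a, ∃ k : ℤ, ∃ b, g = root a * h ^ k * t * root b}

namespace SteinbergRelations

section CommRing

variable {R G : Type*} [CommRing R] [Group G] {j : Rˣ} {root : R → G} {h t : G}

lemma root_zero (S : SteinbergRelations j root h t) : root 0 = 1 := by
  simpa using S.root_add 0 0

lemma root_neg (S : SteinbergRelations j root h t) (x : R) : root (-x) = (root x)⁻¹ :=
  eq_inv_of_mul_eq_one_left <| by rw [← S.root_add, neg_add_cancel, S.root_zero]

lemma weyl_inv (S : SteinbergRelations j root h t) : t⁻¹ = t :=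
  inv_eq_of_mul_eq_one_left <| by rw [← pow_two, S.weyl_sq]

lemma weyl_mul_torus_zpow (S : SteinbergRelations j root h t) (k : ℤ) :
    t * h ^ k = (h ^ k)⁻¹ * t := by
  have conj : t * h * t⁻¹ = h⁻¹ := by simpa only [S.weyl_inv] using S.torus_conj
  rw [← inv_zpow, ← conj, conj_zpow, inv_mul_cancel_right]

lemma root_torus_conj_zpow (S : SteinbergRelations j root h t) (k : ℤ) (x : R) :
    root (↑(j ^ (2 * k)) * x) = (h ^ k)⁻¹ * root x * h ^ k := by
  have succ (k : ℤ) : root (↑(j ^ (2 * (k + 1))) * x) = h⁻¹ * root (↑(j ^ (2 * k)) * x) * h := by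
    rw [S.root_conj, ← mul_assoc, mul_add_one, add_comm, zpow_add, Units.val_mul, zpow_ofNat,
      Units.val_pow_eq_pow_val]
  induction k with
  | zero => simp
  | succ n ih => rw [succ, ih]; group
  | pred n ih =>
    rw [← sub_add_cancel (-n : ℤ) 1, succ] at ih
    calc root (↑(j ^ (2 * (-n - 1 : ℤ))) * x)
        = h * (h⁻¹ * root (↑(j ^ (2 * (-n - 1 : ℤ))) * x) * h) * h⁻¹ := by group
      _ = _ := by rw [ih]; group

lemma root_mul_torus_zpow (S : SteinbergRelations j root h t) (k : ℤ) (x : R) :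
    root x * h ^ k = h ^ k * root (↑(j ^ (2 * k)) * x) := by
  rw [S.root_torus_conj_zpow]; group

lemma torus_zpow_mul_root (S : SteinbergRelations j root h t) (k : ℤ) (x : R) :
    h ^ k * root x = root (↑(j ^ (-(2 * k))) * x) * h ^ k := by
  rw [neg_mul_eq_mul_neg, S.root_torus_conj_zpow]; group

lemma bruhat_add_two_mul (S : SteinbergRelations j root h t) {n : ℤ} (m : ℤ)
    (hn : root ↑(j ^ n)⁻¹ * (t⁻¹ * root ↑(j ^ n) * t) * root ↑(j ^ n)⁻¹ = h ^ n * t) :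
    root ↑(j ^ (n + 2 * m))⁻¹ * (t⁻¹ * root ↑(j ^ (n + 2 * m)) * t) * root ↑(j ^ (n + 2 * m))⁻¹ =
      h ^ (n + 2 * m) * t := by
  have root_eq : root ↑(j ^ (n + 2 * m)) = (h ^ m)⁻¹ * root ↑(j ^ n) * h ^ m := by
    rw [add_comm, zpow_add, Units.val_mul, S.root_torus_conj_zpow]
  have root_inv_eq : root ↑(j ^ (n + 2 * m))⁻¹ = h ^ m * root ↑(j ^ n)⁻¹ * (h ^ m)⁻¹ := by
    rw [S.torus_zpow_mul_root, mul_inv_cancel_right, ← Units.val_mul, ← zpow_neg, ← zpow_neg,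
      ← zpow_add, neg_add_rev]
  have weyl_mul : t * h ^ m = (h ^ m)⁻¹ * t := S.weyl_mul_torus_zpow m
  have mul_weyl_mul : h ^ m * t * h ^ m = t := by rw [mul_assoc, weyl_mul, mul_inv_cancel_left]
  have inv_mul_weyl_mul_inv : (h ^ m)⁻¹ * t⁻¹ * (h ^ m)⁻¹ = t⁻¹ := by
    rw [← mul_inv_rev, ← mul_inv_rev, ← mul_assoc, mul_weyl_mul]
  calc _ = h ^ m * root ↑(j ^ n)⁻¹ * ((h ^ m)⁻¹ * t⁻¹ * (h ^ m)⁻¹) * root ↑(j ^ n) *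
        (h ^ m * t * h ^ m) * root ↑(j ^ n)⁻¹ * (h ^ m)⁻¹ := by rw [root_eq, root_inv_eq]; group
    _ = h ^ m * (root ↑(j ^ n)⁻¹ * (t⁻¹ * root ↑(j ^ n) * t) * root ↑(j ^ n)⁻¹) * (h ^ m)⁻¹ := by
      rw [mul_weyl_mul, inv_mul_weyl_mul_inv]; group
    _ = h ^ (m + n) * (t * h ^ (-m)) := by rw [hn]; group
    _ = h ^ (n + 2 * m) * t := by rw [S.weyl_mul_torus_zpow]; group

lemma bruhat_zpow (S : SteinbergRelations j root h t) (n : ℤ) :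
    root ↑(j ^ n)⁻¹ * (t⁻¹ * root ↑(j ^ n) * t) * root ↑(j ^ n)⁻¹ = h ^ n * t := by
  obtain ⟨m, rfl | rfl⟩ := n.even_or_odd'
  · simpa using S.bruhat_add_two_mul (n := 0) m (by simpa using S.weyl_eq)
  · simpa [add_comm] using S.bruhat_add_two_mul (n := 1) m (by simpa using S.torus_mul_weyl_eq)

lemma bruhat (S : SteinbergRelations j root h t) {x : Rˣ} {n : ℤ}
    (hx : x = j ^ n ∨ x = -j ^ n) :
    root ↑x⁻¹ * (t⁻¹ * root x * t) * root ↑x⁻¹ = h ^ n * t := by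
  rcases hx with rfl | rfl
  · exact S.bruhat_zpow n
  · calc _ = (root ↑(j ^ n)⁻¹ * (t⁻¹ * root ↑(j ^ n) * t) * root ↑(j ^ n)⁻¹)⁻¹ := by
          simp only [inv_neg, Units.val_neg, S.root_neg]; group
      _ = t * h ^ (-n) := by rw [S.bruhat_zpow, mul_inv_rev, S.weyl_inv, zpow_neg]
      _ = h ^ n * t := by rw [S.weyl_mul_torus_zpow, zpow_neg, inv_inv]

lemma weyl_mul_root_mul_weyl (S : SteinbergRelations j root h t) {x : Rˣ} {n : ℤ}
    (hx : x = j ^ n ∨ x = -j ^ n) :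
    t * root x * t = root (-↑x⁻¹) * h ^ n * t * root (-↑x⁻¹) := by
  calc t * root x * t = t⁻¹ * root x * t := by rw [S.weyl_inv]
    _ = (root ↑x⁻¹)⁻¹ * (h ^ n * t) * (root ↑x⁻¹)⁻¹ := by rw [← S.bruhat hx]; group
    _ = root (-↑x⁻¹) * h ^ n * t * root (-↑x⁻¹) := by simp only [S.root_neg, mul_assoc]

lemma torus_zpow_eq_one [NoZeroDivisors R] (S : SteinbergRelations j root h t) {k : ℤ}
    (hk : (j ^ k) ^ 2 = 1) : h ^ k = 1 := by
  have one_eq : (1 : Rˣ) = j ^ k ∨ (1 : Rˣ) = -j ^ k :=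
    Units.eq_or_eq_neg_of_sq_eq_sq _ _ (by rw [hk, one_pow])
  have torus_mul_weyl : t = h ^ k * t := by
    simpa only [inv_one, Units.val_one, S.weyl_eq] using S.bruhat one_eq
  exact right_eq_mul.1 torus_mul_weyl

lemma root_mul_mem_bruhatCells (S : SteinbergRelations j root h t) (x : R) {g : G}
    (hg : g ∈ bruhatCells root h t) : root x * g ∈ bruhatCells root h t := by
  rcases hg with ⟨a, k, rfl⟩ | ⟨a, k, b, rfl⟩
  · exact Or.inl ⟨x + a, k, by rw [S.root_add, mul_assoc]⟩
  · exact Or.inr ⟨x + a, k, b, by simp only [S.root_add, mul_assoc]⟩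

end CommRing

section Field

variable {F G : Type*} [Field F] [Group G] {j : Fˣ} {root : F → G} {h t : G}

lemma weyl_mul_mem_bruhatCells (S : SteinbergRelations j root h t)
    (hj : ∀ x : Fˣ, ∃ n : ℤ, x = j ^ n ∨ x = -j ^ n) {g : G}
    (hg : g ∈ bruhatCells root h t) : t * g ∈ bruhatCells root h t := by
  have torus_mul_weyl (k : ℤ) : h ^ k * t = t * h ^ (-k) := by
    rw [S.weyl_mul_torus_zpow, zpow_neg, inv_inv]
  rcases hg with ⟨a, k, rfl⟩ | ⟨a, k, b, rfl⟩
  · refine Or.inr ⟨0, -k, ↑(j ^ (2 * k)) * a, ?_⟩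
    rw [S.root_mul_torus_zpow, S.root_zero, one_mul, torus_mul_weyl, neg_neg, mul_assoc]
  obtain rfl | ha := eq_or_ne a 0
  · refine Or.inl ⟨↑(j ^ (-(2 * -k))) * b, -k, ?_⟩
    calc t * (root 0 * h ^ k * t * root b) = t ^ 2 * (h ^ (-k) * root b) := by
          rw [S.root_zero, one_mul, torus_mul_weyl, pow_two]; group
      _ = _ := by rw [S.weyl_sq, one_mul, S.torus_zpow_mul_root]
  · lift a to Fˣ using ha.isUnit
    obtain ⟨n, hn⟩ := hj a
    refine Or.inr ⟨-↑a⁻¹, n + k, ↑(j ^ (2 * -k)) * -↑a⁻¹ + b, ?_⟩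
    calc t * (root a * h ^ k * t * root b) = t * root a * (h ^ k * t) * root b := by group
      _ = t * root a * t * h ^ (-k) * root b := by rw [torus_mul_weyl]; group
      _ = root (-↑a⁻¹) * h ^ n * t * (root (-↑a⁻¹) * h ^ (-k)) * root b := by
        rw [S.weyl_mul_root_mul_weyl hn]; group
      _ = root (-↑a⁻¹) * h ^ n * (t * h ^ (-k)) * root (↑(j ^ (2 * -k)) * -↑a⁻¹ + b) := by
        rw [S.root_mul_torus_zpow (-k) (-↑a⁻¹), S.root_add]; group
      _ = _ := by rw [← torus_mul_weyl]; group

lemma closure_subset_bruhatCells (S : SteinbergRelations j root h t)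
    (hj : ∀ x : Fˣ, ∃ n : ℤ, x = j ^ n ∨ x = -j ^ n) :
    (Subgroup.closure (Set.range root ∪ {t}) : Set G) ⊆ bruhatCells root h t := by
  intro g hg
  induction hg using Subgroup.closure_induction_left with
  | one => exact Or.inl ⟨0, 0, by simp [S.root_zero]⟩
  | mul_left x hx y _ hy =>
    rcases hx with ⟨a, rfl⟩ | rfl
    · exact S.root_mul_mem_bruhatCells a hy
    · exact S.weyl_mul_mem_bruhatCells hj hy
  | inv_mul_cancel x hx y _ hy =>
    rcases hx with ⟨a, rfl⟩ | rfl
    · exact S.root_neg a ▸ S.root_mul_mem_bruhatCells (-a) hy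
    · exact S.weyl_inv.symm ▸ S.weyl_mul_mem_bruhatCells hj hy

end Field

end SteinbergRelations

section SL2

variable {R : Type*} [CommRing R]

/-- The matrix `[[1, x], [0, 1]]`, as an elementary transvection. -/
def upperUnipotent (x : R) : SL(2, R) := transvection zero_ne_one x

/-- The matrix `[[a⁻¹, 0], [0, a]]` for a unit `a`. -/
def torus : Rˣ →* SL(2, R) where
  toFun a := ⟨!![↑a⁻¹, 0; 0, ↑a], by simp [Matrix.det_fin_two]⟩
  map_one' := Subtype.ext <| by simp [Matrix.one_fin_two]
  map_mul' a b := Subtype.ext <|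
    show !![_, 0; 0, _] = (!![↑a⁻¹, 0; 0, ↑a] * !![↑b⁻¹, 0; 0, ↑b] : Matrix _ _ R) by
      simp [mul_comm]

variable (R) in
/-- The representative `[[0, 1], [-1, 0]]` of the nontrivial Weyl group element. -/
def weyl : SL(2, R) := ⟨!![0, 1; -1, 0], by simp⟩

lemma coe_upperUnipotent (x : R) :
    (upperUnipotent x : Matrix (Fin 2) (Fin 2) R) = !![1, x; 0, 1] := by
  ext i k
  fin_cases i <;> fin_cases k <;> simp [upperUnipotent, transvection_coe]

lemma coe_torus (a : Rˣ) : (torus a : Matrix (Fin 2) (Fin 2) R) = !![↑a⁻¹, 0; 0, ↑a] := rfl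

lemma coe_weyl : (weyl R : Matrix (Fin 2) (Fin 2) R) = !![0, 1; -1, 0] := rfl

lemma upperUnipotent_pow (x : R) (n : ℕ) : upperUnipotent x ^ n = upperUnipotent (n * x) := by
  induction n with
  | zero => simp [upperUnipotent]
  | succ n ih => rw [pow_succ, ih, Nat.cast_succ, add_one_mul]; exact (transvection_add _ _ _).symm

lemma upperUnipotent_conj_torus (a : Rˣ) (x : R) :
    (torus a)⁻¹ * upperUnipotent x * torus a = upperUnipotent (a ^ 2 * x) := by
  rw [mul_assoc, inv_mul_eq_iff_eq_mul]
  apply Subtype.ext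
  simp [coe_upperUnipotent, coe_torus, pow_two, mul_comm, mul_assoc]

lemma torus_conj_weyl (a : Rˣ) : (weyl R)⁻¹ * torus a * weyl R = (torus a)⁻¹ := by
  rw [mul_assoc, inv_mul_eq_iff_eq_mul, ← map_inv]
  apply Subtype.ext
  simp [coe_torus, coe_weyl]

lemma weyl_sq : weyl R ^ 2 = -1 :=
  Subtype.ext <| by simp [pow_two, coe_weyl, Matrix.one_fin_two]

lemma coe_upperUnipotent_conj_weyl (x : R) :
    ((weyl R)⁻¹ * upperUnipotent x * weyl R : SL(2, R)) =
      (!![1, 0; -x, 1] : Matrix (Fin 2) (Fin 2) R) := by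
  simp [coe_upperUnipotent, coe_weyl, coe_inv, Matrix.adjugate_fin_two]

lemma upperUnipotent_mul_conj_weyl_mul (a : Rˣ) :
    upperUnipotent (↑a⁻¹ : R) * ((weyl R)⁻¹ * upperUnipotent (a : R) * weyl R) *
      upperUnipotent (↑a⁻¹ : R) = torus a * weyl R := by
  apply Subtype.ext
  rw [coe_mul, coe_mul, coe_upperUnipotent_conj_weyl]
  simp [coe_upperUnipotent, coe_torus, coe_weyl]

lemma eq_zero_and_sq_eq_one_of_mem_center {x : R} {a : Rˣ}
    (h : upperUnipotent x * torus a ∈ Subgroup.center SL(2, R)) : x = 0 ∧ a ^ 2 = 1 := by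
  obtain ⟨r, -, hr⟩ := mem_center_iff.1 h
  rw [coe_mul, coe_upperUnipotent, coe_torus] at hr
  have h00 : r = ↑a⁻¹ := by simpa using congr_fun₂ hr 0 0
  have h01 : x = 0 := by simpa using (congr_fun₂ hr 0 1).symm
  have h11 : r = a := by simpa using congr_fun₂ hr 1 1
  exact ⟨h01, by rw [pow_two, ← inv_eq_iff_mul_eq_one]; exact Units.ext (h00.symm.trans h11)⟩

lemma mul_weyl_mul_notMem_center [Nontrivial R] (x y : R) (a : Rˣ) :
    upperUnipotent x * torus a * weyl R * upperUnipotent y ∉ Subgroup.center SL(2, R) := by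
  intro h
  obtain ⟨r, -, hr⟩ := mem_center_iff.1 h
  rw [coe_mul, coe_mul, coe_mul, coe_upperUnipotent, coe_torus, coe_weyl, coe_upperUnipotent] at hr
  simpa using congr_fun₂ hr 1 0

end SL2

lemma closure_upperUnipotent_weyl (F : Type*) [Field F] :
    Subgroup.closure (Set.range (upperUnipotent (R := F)) ∪ {weyl F}) = ⊤ := by
  set K := Subgroup.closure (Set.range (upperUnipotent (R := F)) ∪ {weyl F})
  have upper_mem (x : F) : upperUnipotent x ∈ K := Subgroup.subset_closure (Or.inl ⟨x, rfl⟩)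
  have weyl_mem : weyl F ∈ K := Subgroup.subset_closure (Or.inr rfl)
  have lower_eq (x : F) :
      transvection one_ne_zero x = (weyl F)⁻¹ * upperUnipotent (-x) * weyl F := by
    apply Subtype.ext
    rw [coe_upperUnipotent_conj_weyl, transvection_coe]
    ext i k
    fin_cases i <;> fin_cases k <;> simp
  refine eq_top_iff.2 fun A _ ↦ Matrix.SL2.transvection_induction (· ∈ K) (fun i k hik x ↦ ?_)
    (fun _ _ ↦ mul_mem) A
  fin_cases i <;> fin_cases k
  · exact absurd rfl hik
  · exact upper_mem x
  · exact lower_eq x ▸ mul_mem (mul_mem (inv_mem weyl_mem) (upper_mem (-x))) weyl_mem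
  · exact absurd rfl hik

namespace SteinbergRelations

variable {F G : Type*} [Field F] [Group G] {j : Fˣ} {root : F → G} {h t : G}

lemma injective_of_closure_eq_top (S : SteinbergRelations j root h t)
    (hj : ∀ x : Fˣ, ∃ n : ℤ, x = j ^ n ∨ x = -j ^ n)
    (hgen : Subgroup.closure (Set.range root ∪ {t}) = ⊤) {φ : G →* PSL(2, F)}
    (φ_root : ∀ x, φ (root x) = upperUnipotent x) (φ_torus : φ h = torus j)
    (φ_weyl : φ t = weyl F) : Function.Injective φ := by
  have φ_torus_zpow (k : ℤ) : φ (h ^ k) = torus (j ^ k) := by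
    rw [map_zpow, map_zpow, φ_torus, QuotientGroup.mk_zpow]
  refine (injective_iff_map_eq_one φ).2 fun g hg ↦ ?_
  have mem_cells : g ∈ bruhatCells root h t :=
    S.closure_subset_bruhatCells hj (hgen ▸ Subgroup.mem_top g)
  rcases mem_cells with ⟨a, k, rfl⟩ | ⟨a, k, b, rfl⟩
  · rw [map_mul, φ_root, φ_torus_zpow, ← QuotientGroup.mk_mul, QuotientGroup.eq_one_iff] at hg
    obtain ⟨rfl, hk⟩ := eq_zero_and_sq_eq_one_of_mem_center hg
    rw [S.root_zero, S.torus_zpow_eq_one hk, one_mul]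
  · simp only [map_mul, φ_root, φ_torus_zpow, φ_weyl, ← QuotientGroup.mk_mul,
      QuotientGroup.eq_one_iff] at hg
    exact absurd hg (mul_weyl_mul_notMem_center a b (j ^ k))

end SteinbergRelations

lemma surjective_of_map_root_of_map_weyl {F G : Type*} [Field F] [Group G] {root : F → G} {t : G}
    {φ : G →* PSL(2, F)} (φ_root : ∀ x, φ (root x) = upperUnipotent x) (φ_weyl : φ t = weyl F) :
    Function.Surjective φ := by
  have range_comap : φ.range.comap (QuotientGroup.mk' _) = ⊤ := by
    rw [eq_top_iff, ← closure_upperUnipotent_weyl, Subgroup.closure_le]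
    rintro _ (⟨x, rfl⟩ | rfl)
    · exact ⟨root x, φ_root x⟩
    · exact ⟨t, φ_weyl⟩
  intro y
  obtain ⟨A, rfl⟩ := QuotientGroup.mk_surjective y
  exact (range_comap ▸ Subgroup.mem_top A : A ∈ φ.range.comap (QuotientGroup.mk' _))

/-- The eight relations of `pslRels`, imposed on elements of an arbitrary group. -/
structure PSLRelations {G : Type*} [Group G] (p j jb tb : ℕ) (u h2 h t : G) : Prop where
  u_pow : u ^ p = 1
  u_conj_h2 : h2⁻¹ * u * h2 = u ^ 4
  u_conj_h : h⁻¹ * u * h = u ^ j ^ 2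
  t_sq : t ^ 2 = 1
  h_conj_t : t⁻¹ * h * t = h⁻¹
  t_eq : u * (t⁻¹ * u * t) * u = t
  h2_mul_t_eq : u ^ tb * (t⁻¹ * u ^ 2 * t) * u ^ tb = h2 * t
  h_mul_t_eq : u ^ jb * (t⁻¹ * u ^ j * t) * u ^ jb = h * t

lemma forall_lift_pslRels_eq_one_iff {G : Type*} [Group G] {p j jb tb : ℕ} {f : PSLGen → G} :
    (∀ r ∈ pslRels p j jb tb, FreeGroup.lift f r = 1) ↔
      PSLRelations p j jb tb (f .u) (f .h2) (f .h) (f .t) := by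
  simp only [pslRels, Set.mem_insert_iff, Set.mem_singleton_iff, forall_eq_or_imp, forall_eq,
    map_mul, map_pow, map_inv, FreeGroup.lift_apply_of, mul_inv_eq_one]
  simp only [mul_eq_one_iff_eq_inv]
  exact ⟨fun ⟨h₁, h₂, h₃, h₄, h₅, h₆, h₇, h₈⟩ ↦ ⟨h₁, h₂, h₃, h₄, h₅, h₆, h₇, h₈⟩,
    fun ⟨h₁, h₂, h₃, h₄, h₅, h₆, h₇, h₈⟩ ↦ ⟨h₁, h₂, h₃, h₄, h₅, h₆, h₇, h₈⟩⟩

lemma pslRelations_of (p j jb tb : ℕ) :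
    PSLRelations p j jb tb (PresentedGroup.of (rels := pslRels p j jb tb) .u)
      (PresentedGroup.of .h2) (PresentedGroup.of .h) (PresentedGroup.of .t) := by
  have lift_of : FreeGroup.lift PresentedGroup.of = PresentedGroup.mk (pslRels p j jb tb) := by
    ext g; simp [PresentedGroup.of]
  exact forall_lift_pslRels_eq_one_iff.1 fun r hr ↦ lift_of ▸ PresentedGroup.one_of_mem hr

lemma pslRelations_matrix {R : Type*} [CommRing R] {p : ℕ} [CharP R p] {j jb tb : ℕ} {J W : Rˣ}
    (hJ : (J : R) = j) (hJb : (↑J⁻¹ : R) = jb) (hW : (W : R) = 2) (hWb : (↑W⁻¹ : R) = tb) :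
    PSLRelations p j jb tb (upperUnipotent (1 : R) : PSL(2, R)) (torus W) (torus J) (weyl R) := by
  have pow_eq (n : ℕ) : upperUnipotent (1 : R) ^ n = upperUnipotent (n : R) := by
    rw [upperUnipotent_pow, mul_one]
  have bruhat (a : Rˣ) := upperUnipotent_mul_conj_weyl_mul a
  constructor <;> simp only [← QuotientGroup.mk_mul, ← QuotientGroup.mk_pow, ← QuotientGroup.mk_inv]
  · rw [pow_eq, CharP.cast_eq_zero, upperUnipotent, transvection_coeff_zero, QuotientGroup.mk_one]
  · rw [upperUnipotent_conj_torus, pow_eq, hW]; norm_num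
  · rw [upperUnipotent_conj_torus, pow_eq, hJ]; simp
  · rw [QuotientGroup.eq_one_iff, weyl_sq]
    exact mem_center_iff.2 ⟨-1, by simp, by rw [map_neg, map_one, coe_neg, coe_one]⟩
  · rw [torus_conj_weyl]
  · simpa using congr_arg (QuotientGroup.mk (s := Subgroup.center SL(2, R))) (bruhat 1)
  · rw [pow_eq, pow_eq, Nat.cast_two, ← hWb, ← hW, bruhat]
  · rw [pow_eq, pow_eq, ← hJb, ← hJ, bruhat]

namespace PSLRelations

variable {G : Type*} [Group G] {p j jb tb : ℕ} {u h2 h t : G}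

lemma pow_val_natCast (P : PSLRelations p j jb tb u h2 h t) (n : ℕ) :
    u ^ (n : ZMod p).val = u ^ n := by
  rw [ZMod.val_natCast, ← pow_eq_pow_mod _ P.u_pow]

lemma steinbergRelations [NeZero p] (P : PSLRelations p j jb tb u h2 h t) {J : (ZMod p)ˣ}
    (hJ : (J : ZMod p) = j) (hJb : (↑J⁻¹ : ZMod p) = jb) :
    SteinbergRelations J (fun x : ZMod p ↦ u ^ x.val) h t where
  root_add x y := by rw [ZMod.val_add, ← pow_eq_pow_mod _ P.u_pow, pow_add]
  root_conj x := by
    have conj_pow_val : h⁻¹ * u ^ x.val * h = (h⁻¹ * u * h) ^ x.val := by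
      simpa using (conj_pow (a := h⁻¹) (b := u) (i := x.val)).symm
    have mul_eq : (J : ZMod p) ^ 2 * x = (j ^ 2 * x.val : ℕ) := by simp [hJ]
    rw [conj_pow_val, P.u_conj_h, mul_eq, P.pow_val_natCast, pow_mul]
  weyl_sq := P.t_sq
  torus_conj := P.h_conj_t
  weyl_eq := by
    have val_one : u ^ (1 : ZMod p).val = u := by simpa using P.pow_val_natCast 1
    simpa only [val_one] using P.t_eq
  torus_mul_weyl_eq := by simpa only [hJ, hJb, P.pow_val_natCast] using P.h_mul_t_eq

lemma h2_mem (P : PSLRelations p j jb tb u h2 h t) {K : Subgroup G} (hu : u ∈ K) (ht : t ∈ K) :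
    h2 ∈ K := by
  rw [← K.mul_mem_cancel_right ht, ← P.h2_mul_t_eq]
  apply_rules [mul_mem, pow_mem, inv_mem]

lemma h_mem (P : PSLRelations p j jb tb u h2 h t) {K : Subgroup G} (hu : u ∈ K) (ht : t ∈ K) :
    h ∈ K := by
  rw [← K.mul_mem_cancel_right ht, ← P.h_mul_t_eq]
  apply_rules [mul_mem, pow_mem, inv_mem]

end PSLRelations

lemma closure_pow_val_of_eq_top (p j jb tb : ℕ) :
    Subgroup.closure (Set.range (fun x : ZMod p ↦
      PresentedGroup.of (rels := pslRels p j jb tb) .u ^ x.val) ∪ {PresentedGroup.of .t}) = ⊤ := by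
  have P := pslRelations_of p j jb tb
  set K := Subgroup.closure (Set.range (fun x : ZMod p ↦
    PresentedGroup.of (rels := pslRels p j jb tb) .u ^ x.val) ∪ {PresentedGroup.of .t})
  have u_mem : PresentedGroup.of .u ∈ K :=
    Subgroup.subset_closure (Or.inl ⟨1, by simpa using P.pow_val_natCast 1⟩)
  have t_mem : PresentedGroup.of .t ∈ K := Subgroup.subset_closure (Or.inr rfl)
  refine eq_top_iff.2 fun g _ ↦ PresentedGroup.generated_by _ K (fun x ↦ ?_) g
  cases x
  · exact u_mem
  · exact P.h2_mem u_mem t_mem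
  · exact P.h_mem u_mem t_mem
  · exact t_mem

/-- The matrices that the generators are sent to, for units `J` and `W` standing for the residues
of `j` and `2`. -/
def pslGenMatrix {R : Type*} [CommRing R] (J W : Rˣ) : PSLGen → SL(2, R)
  | .u => upperUnipotent 1
  | .h2 => torus W
  | .h => torus J
  | .t => weyl R

theorem presentation_of_PSL2_general
    (p : ℕ) (hp : p.Prime) (j : ℕ)
    (hjgen : ∀ x : (ZMod p)ˣ, ∃ k : ℕ, (x : ZMod p) = (j : ZMod p) ^ k ∨
      (x : ZMod p) = -(j : ZMod p) ^ k)
    (jb : ℕ) (hjb : (j * jb : ZMod p) = 1) (tb : ℕ) (htb : (2 * tb : ZMod p) = 1) :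
    ∃ e : PresentedGroup (pslRels p j jb tb) ≃* PSL(2, ZMod p),
      ∃ U H2 H T : SL(2, ZMod p),
        (U : Matrix (Fin 2) (Fin 2) (ZMod p)) = !![1, 1; 0, 1] ∧
        (H2 : Matrix (Fin 2) (Fin 2) (ZMod p)) = !![(tb : ZMod p), 0; 0, 2] ∧
        (H : Matrix (Fin 2) (Fin 2) (ZMod p)) = !![(jb : ZMod p), 0; 0, (j : ZMod p)] ∧
        (T : Matrix (Fin 2) (Fin 2) (ZMod p)) = !![0, 1; -1, 0] ∧
        e (PresentedGroup.of (rels := pslRels p j jb tb) PSLGen.u) = QuotientGroup.mk U ∧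
        e (PresentedGroup.of (rels := pslRels p j jb tb) PSLGen.h2) = QuotientGroup.mk H2 ∧
        e (PresentedGroup.of (rels := pslRels p j jb tb) PSLGen.h) = QuotientGroup.mk H ∧
        e (PresentedGroup.of (rels := pslRels p j jb tb) PSLGen.t) = QuotientGroup.mk T := by
  have : Fact p.Prime := ⟨hp⟩
  let J : (ZMod p)ˣ := .mkOfMulEqOne j jb hjb
  let W : (ZMod p)ˣ := .mkOfMulEqOne 2 tb htb
  have J_gen (x : (ZMod p)ˣ) : ∃ n : ℤ, x = J ^ n ∨ x = -J ^ n := by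
    obtain ⟨k, hk⟩ := hjgen x
    exact ⟨k, by simpa [Units.ext_iff, J] using hk⟩
  let φ := PresentedGroup.toGroup (f := fun x ↦ (pslGenMatrix J W x : PSL(2, ZMod p)))
    (forall_lift_pslRels_eq_one_iff.2 (pslRelations_matrix (J := J) (W := W) rfl rfl rfl rfl))
  have φ_of (x : PSLGen) : φ (.of x) = (pslGenMatrix J W x : PSL(2, ZMod p)) :=
    PresentedGroup.toGroup.of _
  have φ_root (x : ZMod p) : φ (.of .u ^ x.val) = upperUnipotent x := by
    rw [map_pow, φ_of, ← QuotientGroup.mk_pow, pslGenMatrix, upperUnipotent_pow, mul_one,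
      ZMod.natCast_zmod_val]
  have S := (pslRelations_of p j jb tb).steinbergRelations (J := J) rfl rfl
  have φ_injective : Function.Injective φ :=
    S.injective_of_closure_eq_top J_gen (closure_pow_val_of_eq_top p j jb tb) φ_root (φ_of .h)
      (φ_of .t)
  have φ_surjective : Function.Surjective φ :=
    surjective_of_map_root_of_map_weyl φ_root (φ_of .t)
  exact ⟨.ofBijective φ ⟨φ_injective, φ_surjective⟩, upperUnipotent 1, torus W, torus J, weyl _,
    coe_upperUnipotent 1, rfl, rfl, rfl, φ_of .u, φ_of .h2, φ_of .h, φ_of .t⟩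

/-- For a prime `p > 3`, an integer `j` whose residue generates `(ℤ/p)ˣ`, and `j̄, 2̄`
the inverses of `j` and `2` modulo `p` lying in `[1, p]`, the group presented by
`u, h₂, h, t` subject to the eight relations of `pslRels` is isomorphic to
`PSL(2, 𝔽_p)`, via the map sending the generators to the images of the matrices
`[[1,1],[0,1]]`, `[[2̄,0],[0,2]]`, `[[j̄,0],[0,j]]`, `[[0,1],[-1,0]]`. -/
theorem presentation_of_PSL2
    (p : ℕ) (hp : p.Prime) (hp3 : 3 < p)
    (j : ℕ) (hj1 : 1 ≤ j) (hjp : j ≤ p - 1)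
    (hjgen : ∀ x : (ZMod p)ˣ, ∃ k : ℕ, (x : ZMod p) = (j : ZMod p) ^ k)
    (jb : ℕ) (hjb1 : 1 ≤ jb) (hjbp : jb ≤ p) (hjb : (j * jb) % p = 1)
    (tb : ℕ) (htb1 : 1 ≤ tb) (htbp : tb ≤ p) (htb : (2 * tb) % p = 1) :
    ∃ e : PresentedGroup (pslRels p j jb tb) ≃*
        (Matrix.SpecialLinearGroup (Fin 2) (ZMod p) ⧸
          Subgroup.center (Matrix.SpecialLinearGroup (Fin 2) (ZMod p))),
      ∃ U H2 H T : Matrix.SpecialLinearGroup (Fin 2) (ZMod p),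
        (U : Matrix (Fin 2) (Fin 2) (ZMod p)) = !![1, 1; 0, 1] ∧
        (H2 : Matrix (Fin 2) (Fin 2) (ZMod p)) = !![(tb : ZMod p), 0; 0, 2] ∧
        (H : Matrix (Fin 2) (Fin 2) (ZMod p)) = !![(jb : ZMod p), 0; 0, (j : ZMod p)] ∧
        (T : Matrix (Fin 2) (Fin 2) (ZMod p)) = !![0, 1; -1, 0] ∧
        e (PresentedGroup.of (rels := pslRels p j jb tb) PSLGen.u) = QuotientGroup.mk U ∧
        e (PresentedGroup.of (rels := pslRels p j jb tb) PSLGen.h2) = QuotientGroup.mk H2 ∧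
        e (PresentedGroup.of (rels := pslRels p j jb tb) PSLGen.h) = QuotientGroup.mk H ∧
        e (PresentedGroup.of (rels := pslRels p j jb tb) PSLGen.t) = QuotientGroup.mk T := by
  have natCast_eq_one {n : ℕ} (hn : n % p = 1) : (n : ZMod p) = 1 := by
    rw [← ZMod.natCast_mod, hn, Nat.cast_one]
  exact presentation_of_PSL2_general p hp j (fun x ↦ (hjgen x).imp fun _ ↦ Or.inl)
    jb (by exact_mod_cast natCast_eq_one hjb) tb (by exact_mod_cast natCast_eq_one htb)
end

section
/- Let p > 3 be a prime, let j be an integer with 1 ≤ j ≤ p − 1 whose residue generates (ℤ/pℤ)ˣ, let j̄, 2̄ be the integers in [1, p] with j·j̄ ≡ 1 and 2·2̄ ≡ 1 (mod p), and let s be an integer with 1 ≤ s ≤ p − 1 whose residue is a non-square in (ℤ/pℤ)ˣ. Then the group presented by generators u, h₂, h, t, z subject to the fifteen relations: u^p = 1, u^{h₂} = u⁴, u^{h} = u^{j²}, t² = 1, h^t = h⁻¹, t = u·u^t·u, h₂·t = u^{2̄}·(u²)^t·u^{2̄}, h·t = u^{j̄}·(u^{j})^t·u^{j̄}, [z, u^t]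 = 1, [z, h] = 1, z² = 1, [z,t]³ = 1, ([z,t][z,u])² = 1, ([z,t][z,u^s])² = 1, and (zu)^{p+1} = 1, is isomorphic to the symmetric group S_{p+2}. -/
/-!
Write `Y x = z ^ (u ^ x)` for `x ∈ ℤ/p` and `Y ∞ = z ^ t`. By the first ten relations, conjugation
by `u` and by `t` permutes these `p + 1` elements as `x ↦ x - 1` and `x ↦ -1 / x` permute the
projective line; the element `t * χ(1/x) χ(x)^t χ(1/x)`, where `χ x = u ^ x`, commutes with `z`
because it is a power of `h` for `x` a power of `j`. Since `SL₂(p)` is transitive on ordered pairs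
of distinct points and has two orbits on ordered triples, represented by `(0, ∞, 1)` and
`(0, ∞, s)`, the relations `z² = 1`, `[z,t]³ = 1`, `([z,t][z,u])² = 1` and `([z,t][z,u^s])² = 1`
spread to Carmichael's relations for all of `Y`. These bound the order of the subgroup `N`
generated by `Y` by `(p + 2)!`: adjoining the `k`-th generator multiplies the order by at most
`k + 1`. Modulo the normal subgroup `N`, the relation `(zu)^{p+1} = 1` reads `u^{p+1} = 1`, so
`u^p = 1` gives `u ∈ N`, and then `N` is the whole group.

Conversely, the Möbius transformations together with the transposition of `0` with an extra point
satisfy the relations and generate all permutations of the `p + 2` points.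
-/

/-- The commutator `[g,h] = g⁻¹h⁻¹gh`. -/
def pcomm {G : Type} [Group G] (g h : G) : G := g⁻¹ * h⁻¹ * g * h

/-- The five generators `u, h₂, h, t, z` of the presentation of `S_{p+2}`. -/
inductive SpGen : Type
  | u : SpGen
  | h2 : SpGen
  | h : SpGen
  | t : SpGen
  | z : SpGen

open FreeGroup in
/-- The fifteen relators of the presentation of `S_{p+2}`:
`u^p`, `u^{h₂} = u⁴`, `u^{h} = u^{j²}`, `t² = 1`, `h^t = h⁻¹`, `t = u·uᵗ·u`,
`h₂·t = u^{2̄}·(u²)ᵗ·u^{2̄}`, `h·t = u^{j̄}·(uʲ)ᵗ·u^{j̄}`, `[z, uᵗ] = 1`, `[z, h] = 1`,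
`z² = 1`, `[z,t]³ = 1`, `([z,t][z,u])² = 1`, `([z,t][z,uˢ])² = 1`, `(zu)^{p+1} = 1`. -/
def spRels (p j jb tb s : ℕ) : Set (FreeGroup SpGen) :=
  { of SpGen.u ^ p,
    (of SpGen.h2)⁻¹ * of SpGen.u * of SpGen.h2 * (of SpGen.u ^ 4)⁻¹,
    (of SpGen.h)⁻¹ * of SpGen.u * of SpGen.h * (of SpGen.u ^ (j ^ 2))⁻¹,
    of SpGen.t ^ 2,
    (of SpGen.t)⁻¹ * of SpGen.h * of SpGen.t * of SpGen.h,
    of SpGen.u * ((of SpGen.t)⁻¹ * of SpGen.u * of SpGen.t) * of SpGen.u *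
      (of SpGen.t)⁻¹,
    of SpGen.u ^ tb * ((of SpGen.t)⁻¹ * of SpGen.u ^ 2 * of SpGen.t) *
      of SpGen.u ^ tb * (of SpGen.h2 * of SpGen.t)⁻¹,
    of SpGen.u ^ jb * ((of SpGen.t)⁻¹ * of SpGen.u ^ j * of SpGen.t) *
      of SpGen.u ^ jb * (of SpGen.h * of SpGen.t)⁻¹,
    pcomm (of SpGen.z) ((of SpGen.t)⁻¹ * of SpGen.u * of SpGen.t),
    pcomm (of SpGen.z) (of SpGen.h),
    of SpGen.z ^ 2,
    pcomm (of SpGen.z) (of SpGen.t) ^ 3,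
    (pcomm (of SpGen.z) (of SpGen.t) * pcomm (of SpGen.z) (of SpGen.u)) ^ 2,
    (pcomm (of SpGen.z) (of SpGen.t) * pcomm (of SpGen.z) (of SpGen.u ^ s)) ^ 2,
    (of SpGen.z * of SpGen.u) ^ (p + 1) }

/-! ### Carmichael's relations -/

/-- Carmichael's relations for a family of group elements: those satisfied by the transpositions
`(x ⋆)` of a set with one extra point `⋆`. -/
structure CarmichaelRelations {ι G : Type*} [Group G] (Z : ι → G) : Prop where
  sq_eq_one (a : ι) : Z a ^ 2 = 1
  mul_pow_three_eq_one {a b : ι} : a ≠ b → (Z a * Z b) ^ 3 = 1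
  mul_sq_eq_one {a b c : ι} : a ≠ b → a ≠ c → b ≠ c → (Z a * Z b * Z a * Z c) ^ 2 = 1

namespace CarmichaelRelations

open Pointwise

variable {ι G : Type*} [Group G] {Z : ι → G}

theorem mul_self (hZ : CarmichaelRelations Z) (a : ι) : Z a * Z a = 1 := by
  rw [← sq, hZ.sq_eq_one]

theorem inv_eq (hZ : CarmichaelRelations Z) (a : ι) : (Z a)⁻¹ = Z a :=
  inv_eq_of_mul_eq_one_left (hZ.mul_self a)

theorem mul_mul_self (hZ : CarmichaelRelations Z) {a b : ι} (hab : a ≠ b) :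
    Z a * Z b * Z a = Z b * (Z a * Z b) := by
  have h : (Z a * Z b * Z a) * (Z b * (Z a * Z b)) = 1 := by
    rw [← hZ.mul_pow_three_eq_one hab, pow_three]; group
  simpa [hZ.inv_eq, mul_assoc] using eq_inv_of_mul_eq_one_left h

theorem mul_mul (hZ : CarmichaelRelations Z) {a b c : ι} (hab : a ≠ b) (hac : a ≠ c)
    (hbc : b ≠ c) : Z a * Z b * Z c = Z b * Z c * Z b * (Z a * Z b) := by
  have h : (Z b * Z a * Z b * Z c) * (Z b * Z a * Z b * Z c) = 1 := by
    rw [← sq, hZ.mul_sq_eq_one hab.symm hbc hac]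
  have hcomm : Z b * Z a * Z b * Z c = Z c * (Z b * (Z a * Z b)) := by
    simpa [hZ.inv_eq, mul_assoc] using eq_inv_of_mul_eq_one_left h
  calc Z a * Z b * Z c = Z b * (Z b * Z a * Z b * Z c) := by
        simp only [← mul_assoc, hZ.mul_self, one_mul]
    _ = Z b * Z c * Z b * (Z a * Z b) := by rw [hcomm]; simp only [mul_assoc]

/-- Representatives of the right cosets of the subgroup generated by the `Z b` with `b ∈ S` in the
subgroup generated by these and `Z a`. -/
def cosetReps (Z : ι → G) (a : ι) (S : Set ι) : Set G :=
  insert 1 (insert (Z a) ((fun b ↦ Z a * Z b) '' S))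

theorem ncard_cosetReps_le (Z : ι → G) (a : ι) {S : Set ι} (hS : S.Finite) :
    (cosetReps Z a S).ncard ≤ S.ncard + 2 := by
  have h₁ := Set.ncard_insert_le 1 (insert (Z a) ((fun b ↦ Z a * Z b) '' S))
  have h₂ := Set.ncard_insert_le (Z a) ((fun b ↦ Z a * Z b) '' S)
  have h₃ := Set.ncard_image_le (f := fun b ↦ Z a * Z b) hS
  unfold cosetReps
  lia

theorem mul_mem_closure_mul_cosetReps (hZ : CarmichaelRelations Z) {a b : ι} {S : Set ι}
    (ha : a ∉ S) (hb : b ∈ insert a S) {g : G}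
    (hg : g ∈ (Subgroup.closure (Z '' S) : Set G) * cosetReps Z a S) :
    g * Z b ∈ (Subgroup.closure (Z '' S) : Set G) * cosetReps Z a S := by
  obtain ⟨k, hk, r, hr, rfl⟩ := hg
  have hmem {c : ι} (hc : c ∈ S) : Z c ∈ Subgroup.closure (Z '' S) :=
    Subgroup.subset_closure ⟨c, hc, rfl⟩
  suffices ∃ k' ∈ Subgroup.closure (Z '' S), ∃ r' ∈ cosetReps Z a S, r * Z b = k' * r' by
    obtain ⟨k', hk', r', hr', h⟩ := this
    exact ⟨k * k', mul_mem hk hk', r', hr', by simp only [mul_assoc, h]⟩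
  have hone : (1 : G) ∈ cosetReps Z a S := .inl rfl
  have hZa : Z a ∈ cosetReps Z a S := .inr (.inl rfl)
  have hZaZ {c : ι} (hc : c ∈ S) : Z a * Z c ∈ cosetReps Z a S := .inr (.inr ⟨c, hc, rfl⟩)
  obtain rfl | rfl | ⟨c, hc, rfl⟩ := hr <;> obtain rfl | hb := hb
  · exact ⟨1, one_mem _, _, hZa, rfl⟩
  · exact ⟨Z b, hmem hb, 1, hone, by simp⟩
  · exact ⟨1, one_mem _, 1, hone, by simp [hZ.mul_self]⟩
  · exact ⟨1, one_mem _, _, hZaZ hb, by simp⟩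
  · exact ⟨Z c, hmem hc, _, hZaZ hc, hZ.mul_mul_self (ne_of_mem_of_not_mem hc ha).symm⟩
  · obtain rfl | hcb := eq_or_ne c b
    · exact ⟨1, one_mem _, _, hZa, by simp [mul_assoc, hZ.mul_self]⟩
    · exact ⟨Z c * Z b * Z c, mul_mem (mul_mem (hmem hc) (hmem hb)) (hmem hc), _, hZaZ hc,
        hZ.mul_mul (ne_of_mem_of_not_mem hc ha).symm (ne_of_mem_of_not_mem hb ha).symm hcb⟩

theorem closure_image_insert_subset (hZ : CarmichaelRelations Z) {a : ι} {S : Set ι}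
    (ha : a ∉ S) : (Subgroup.closure (Z '' insert a S) : Set G) ⊆
      (Subgroup.closure (Z '' S) : Set G) * cosetReps Z a S := by
  intro g hg
  induction hg using Subgroup.closure_induction_right with
  | one => exact ⟨1, one_mem _, 1, .inl rfl, one_mul 1⟩
  | mul_right g _ _ hb ih =>
    obtain ⟨b, hb, rfl⟩ := hb
    exact hZ.mul_mem_closure_mul_cosetReps ha hb ih
  | mul_inv_cancel g _ _ hb ih =>
    obtain ⟨b, hb, rfl⟩ := hb
    rw [hZ.inv_eq]
    exact hZ.mul_mem_closure_mul_cosetReps ha hb ih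

theorem finite_closure_image_and_ncard_le (hZ : CarmichaelRelations Z) {S : Set ι}
    (hS : S.Finite) : (Subgroup.closure (Z '' S) : Set G).Finite ∧
      (Subgroup.closure (Z '' S) : Set G).ncard ≤ (S.ncard + 1).factorial := by
  induction S, hS using Set.Finite.induction_on with
  | empty => simp
  | @insert a S ha hS ih =>
    have hreps : (cosetReps Z a S).Finite := ((hS.image _).insert _).insert _
    have hfin := ih.1.mul hreps
    have hsub := hZ.closure_image_insert_subset ha
    refine ⟨hfin.subset hsub, ?_⟩
    calc (Subgroup.closure (Z '' insert a S) : Set G).ncard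
        ≤ ((Subgroup.closure (Z '' S) : Set G) * cosetReps Z a S).ncard :=
          Set.ncard_le_ncard hsub hfin
      _ ≤ (Subgroup.closure (Z '' S) : Set G).ncard * (cosetReps Z a S).ncard :=
          Set.natCard_mul_le
      _ ≤ (S.ncard + 1).factorial * (S.ncard + 2) :=
          Nat.mul_le_mul ih.2 (ncard_cosetReps_le Z a hS)
      _ = ((insert a S).ncard + 1).factorial := by
          rw [Set.ncard_insert_of_notMem ha hS, Nat.factorial_succ (S.ncard + 1), mul_comm]

theorem finite_and_natCard_le [Finite ι] (hZ : CarmichaelRelations Z)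
    (hgen : Subgroup.closure (Set.range Z) = ⊤) :
    Finite G ∧ Nat.card G ≤ (Nat.card ι + 1).factorial := by
  have h := hZ.finite_closure_image_and_ncard_le (Set.finite_univ (α := ι))
  rwa [Set.image_univ, hgen, Subgroup.coe_top, Set.finite_univ_iff, Set.ncard_univ,
    Set.ncard_univ] at h

end CarmichaelRelations

/-! ### Möbius transformations of the projective line -/

open scoped MatrixGroups OnePoint

section ProjectiveLine

open Matrix OnePoint

variable {F : Type*} [Field F]

/-- The translation `x ↦ x - c` of the projective line. The sign is such that the generator `u` of
the presentation, under which `z ^ (u ^ x)` is conjugated to `z ^ (u ^ (x - 1))`, corresponds to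
`translation 1`. -/
def translation : AddChar F SL(2, F) where
  toFun c := SpecialLinearGroup.transvection zero_ne_one (-c)
  map_zero_eq_one' := by simp
  map_add_eq_mul' a b := by rw [neg_add, SpecialLinearGroup.transvection_add]

theorem translation_apply (c : F) :
    translation c = SpecialLinearGroup.transvection zero_ne_one (-c) := rfl

theorem coe_translation (c : F) : (translation c : Matrix (Fin 2) (Fin 2) F) = !![1, -c; 0, 1] := by
  ext i j
  fin_cases i <;> fin_cases j <;>
    simp [translation_apply, SpecialLinearGroup.transvection_coe]

/-- The involution `x ↦ -1 / x` of the projective line. -/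
def inversion : SL(2, F) := ⟨!![0, -1; 1, 0], by simp⟩

theorem coe_inversion : ((inversion : SL(2, F)) : Matrix (Fin 2) (Fin 2) F) = !![0, -1; 1, 0] := rfl

theorem inversion_inv_mul_translation_mul_inversion (c : F) :
    inversion⁻¹ * translation c * inversion =
      SpecialLinearGroup.transvection one_ne_zero c := by
  ext i j
  fin_cases i <;> fin_cases j <;>
    simp [coe_translation, coe_inversion, SpecialLinearGroup.transvection_coe, adjugate_fin_two]

theorem translation_mul_conj_mul_translation {b c : F} (hcb : c * b = 1) :
    translation b * (inversion⁻¹ * translation c * inversion) * translation b =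
      SpecialLinearGroup.diag2 b (right_ne_zero_of_mul_eq_one hcb) * inversion := by
  have hbc : b * c = 1 := mul_comm c b ▸ hcb
  ext i j
  fin_cases i <;> fin_cases j <;>
    simp [coe_translation, coe_inversion, SpecialLinearGroup.diag2_coe', adjugate_fin_two, hbc, hcb,
      inv_eq_of_mul_eq_one_right hbc]

theorem diag2_one : SpecialLinearGroup.diag2 (1 : F) one_ne_zero = 1 := by
  ext i j
  fin_cases i <;> fin_cases j <;> simp [SpecialLinearGroup.diag2_coe']

theorem diag2_inv_mul_translation_mul_diag2 {b c : F} (hcb : c * b = 1) (a : F) :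
    (SpecialLinearGroup.diag2 b (right_ne_zero_of_mul_eq_one hcb))⁻¹ * translation a *
      SpecialLinearGroup.diag2 b (right_ne_zero_of_mul_eq_one hcb) = translation (c ^ 2 * a) := by
  have hb := right_ne_zero_of_mul_eq_one hcb
  obtain rfl := inv_eq_of_mul_eq_one_left hcb
  ext i j
  fin_cases i <;> fin_cases j <;>
    simp [coe_translation, SpecialLinearGroup.diag2_coe', hb, adjugate_fin_two, pow_two,
      mul_right_comm]

theorem inversion_inv_mul_diag2_mul_inversion {b : F} (hb : b ≠ 0) :
    inversion⁻¹ * SpecialLinearGroup.diag2 b hb * inversion =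
      (SpecialLinearGroup.diag2 b hb)⁻¹ := by
  ext i j
  fin_cases i <;> fin_cases j <;>
    simp [coe_inversion, SpecialLinearGroup.diag2_coe', adjugate_fin_two]

theorem translation_inversion_induction {P : SL(2, F) → Prop}
    (htranslation : ∀ c, P (translation c)) (hinversion : P inversion)
    (hinv : ∀ m, P m → P m⁻¹) (hmul : ∀ m n, P m → P n → P (m * n)) (m : SL(2, F)) : P m := by
  refine SL2.transvection_induction P (fun i j hij c ↦ ?_) hmul m
  fin_cases i <;> fin_cases j
  · exact absurd rfl hij
  · simpa [translation_apply] using htranslation (-c)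
  · have := hmul _ _ (hmul _ _ (hinv _ hinversion) (htranslation c)) hinversion
    rwa [inversion_inv_mul_translation_mul_inversion] at this
  · exact absurd rfl hij

theorem exists_eq_sq_or_eq_sq_mul [Finite F] {s : F} (hs : ¬ IsSquare s) (x : F) :
    ∃ b, x = b ^ 2 ∨ x = b ^ 2 * s := by
  classical
  have := Fintype.ofFinite F
  have hs₀ : s ≠ 0 := by rintro rfl; simp at hs
  by_cases hx : IsSquare x
  · obtain ⟨b, rfl⟩ := hx
    exact ⟨b, .inl (pow_two b).symm⟩
  · obtain ⟨c, hc⟩ : IsSquare (x * s) := by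
      have hx₀ : x ≠ 0 := by rintro rfl; simp at hx
      rw [← quadraticChar_one_iff_isSquare (mul_ne_zero hx₀ hs₀), map_mul,
        quadraticChar_neg_one_iff_not_isSquare.mpr hx,
        quadraticChar_neg_one_iff_not_isSquare.mpr hs]
      norm_num
    exact ⟨c / s, .inr (by field_simp; rw [hc, pow_two])⟩

variable [DecidableEq F]

/-- The action of `SL(2, F)` on the projective line `F ∪ {∞}` by Möbius transformations. -/
noncomputable def moebius : SL(2, F) →* Equiv.Perm (OnePoint F) :=
  (MulAction.toPermHom (GL (Fin 2) F) (OnePoint F)).comp SpecialLinearGroup.toGL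

theorem moebius_infty (m : SL(2, F)) :
    moebius m ∞ = if m 1 0 = 0 then ∞ else ((m 0 0 / m 1 0 : F) : OnePoint F) :=
  smul_infty_eq_ite _

theorem moebius_coe (m : SL(2, F)) (x : F) :
    moebius m x = if m 1 0 * x + m 1 1 = 0 then ∞ else
      (((m 0 0 * x + m 0 1) / (m 1 0 * x + m 1 1) : F) : OnePoint F) :=
  smul_some_eq_ite

theorem moebius_translation_infty (c : F) : moebius (translation c) ∞ = ∞ := by
  simp [moebius_infty, coe_translation]

theorem moebius_translation_coe (c x : F) :
    moebius (translation c) x = ((x - c : F) : OnePoint F) := by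
  simp [moebius_coe, coe_translation, sub_eq_add_neg]

theorem moebius_inversion_infty : moebius inversion (∞ : OnePoint F) = (0 : F) := by
  simp [moebius_infty, coe_inversion]

theorem moebius_inversion_zero : moebius inversion ((0 : F) : OnePoint F) = ∞ := by
  simp [moebius_coe, coe_inversion]

theorem moebius_inversion_coe {x : F} (hx : x ≠ 0) :
    moebius inversion (x : OnePoint F) = ((-x⁻¹ : F) : OnePoint F) := by
  simp [moebius_coe, coe_inversion, hx, neg_div]

theorem moebius_inversion_sq : moebius (inversion : SL(2, F)) ^ 2 = 1 := by
  ext x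
  rw [pow_two, Equiv.Perm.mul_apply, Equiv.Perm.one_apply]
  induction x using OnePoint.rec with
  | infty => rw [moebius_inversion_infty, moebius_inversion_zero]
  | coe x =>
    obtain rfl | hx := eq_or_ne x 0
    · rw [moebius_inversion_zero, moebius_inversion_infty]
    · rw [moebius_inversion_coe hx, moebius_inversion_coe (by simpa), inv_neg, inv_inv, neg_neg]

theorem moebius_diag2_infty {b : F} (hb : b ≠ 0) :
    moebius (SpecialLinearGroup.diag2 b hb) ∞ = ∞ := by
  simp [moebius_infty, SpecialLinearGroup.diag2_coe']

theorem moebius_diag2_coe {b : F} (hb : b ≠ 0) (x : F) :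
    moebius (SpecialLinearGroup.diag2 b hb) x = ((b ^ 2 * x : F) : OnePoint F) := by
  simp [moebius_coe, SpecialLinearGroup.diag2_coe', hb, pow_two, mul_right_comm]

theorem exists_moebius_infty_eq (b : OnePoint F) : ∃ m, moebius m ∞ = b := by
  induction b using OnePoint.rec with
  | infty => exact ⟨1, by simp⟩
  | coe x =>
    refine ⟨translation (-x) * inversion, ?_⟩
    rw [map_mul, Equiv.Perm.mul_apply, moebius_inversion_infty, moebius_translation_coe]
    simp

theorem exists_moebius_zero_eq_infty_eq {a b : OnePoint F} (hab : a ≠ b) :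
    ∃ m, moebius m (0 : F) = a ∧ moebius m ∞ = b := by
  obtain ⟨m, rfl⟩ := exists_moebius_infty_eq b
  obtain ⟨x, hx⟩ : ∃ x : F, moebius m x = a := by
    obtain ⟨y, rfl⟩ := (moebius m).surjective a
    obtain ⟨x, rfl⟩ := ne_infty_iff_exists.mp fun h ↦ hab (congrArg _ h)
    exact ⟨x, rfl⟩
  refine ⟨m * translation (-x), ?_, ?_⟩ <;> rw [map_mul, Equiv.Perm.mul_apply]
  · simpa [moebius_translation_coe]
  · rw [moebius_translation_infty]

theorem exists_moebius_zero_infty_one [Finite F] {s : F} (hs : ¬ IsSquare s) {a b c : OnePoint F}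
    (hab : a ≠ b) (hac : a ≠ c) (hbc : b ≠ c) :
    ∃ m, moebius m (0 : F) = a ∧ moebius m ∞ = b ∧
      (moebius m (1 : F) = c ∨ moebius m s = c) := by
  obtain ⟨m, rfl, rfl⟩ := exists_moebius_zero_eq_infty_eq hab
  obtain ⟨y, rfl⟩ := (moebius m).surjective c
  obtain ⟨x, rfl⟩ := ne_infty_iff_exists.mp fun h ↦ hbc (congrArg _ h.symm)
  have hx : x ≠ 0 := by rintro rfl; exact hac rfl
  obtain ⟨d, hd⟩ := exists_eq_sq_or_eq_sq_mul hs x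
  have hd₀ : d ≠ 0 := by rintro rfl; exact hx (by simpa using hd)
  refine ⟨m * SpecialLinearGroup.diag2 d hd₀, ?_⟩
  simp only [map_mul, Equiv.Perm.mul_apply, moebius_diag2_coe, moebius_diag2_infty, mul_zero,
    mul_one, true_and]
  exact hd.imp (by rintro rfl; rfl) (by rintro rfl; rfl)

theorem exists_conj_eq_moebius {G : Type*} [Group G] {Y : OnePoint F → G}
    (htranslation : ∀ c, ∃ g, ∀ x, g * Y x * g⁻¹ = Y (moebius (translation c) x))
    (hinversion : ∃ g, ∀ x, g * Y x * g⁻¹ = Y (moebius inversion x)) (m : SL(2, F)) :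
    ∃ g, ∀ x, g * Y x * g⁻¹ = Y (moebius m x) := by
  induction m using translation_inversion_induction with
  | htranslation c => exact htranslation c
  | hinversion => exact hinversion
  | hinv m ih =>
    obtain ⟨g, hg⟩ := ih
    refine ⟨g⁻¹, fun x ↦ ?_⟩
    obtain ⟨y, rfl⟩ := (moebius m).surjective x
    simp [← hg, mul_assoc]
  | hmul m n ihm ihn =>
    obtain ⟨g, hg⟩ := ihm
    obtain ⟨k, hk⟩ := ihn
    refine ⟨g * k, fun x ↦ ?_⟩
    rw [map_mul, Equiv.Perm.mul_apply, ← hg, ← hk]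
    group

theorem CarmichaelRelations.of_conj {G : Type*} [Group G] [Finite F] {Y : OnePoint F → G}
    (hY : ∀ m, ∃ g, ∀ x, g * Y x * g⁻¹ = Y (moebius m x)) {s : F} (hs : ¬ IsSquare s)
    (hsq : Y (0 : F) ^ 2 = 1) (hthree : (Y (0 : F) * Y ∞) ^ 3 = 1)
    (hone : (Y (0 : F) * Y ∞ * Y (0 : F) * Y (1 : F)) ^ 2 = 1)
    (hns : (Y (0 : F) * Y ∞ * Y (0 : F) * Y s) ^ 2 = 1) : CarmichaelRelations Y where
  sq_eq_one a := by
    have : Nontrivial (OnePoint F) := ⟨∞, (0 : F), infty_ne_coe 0⟩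
    obtain ⟨b, hab⟩ := exists_ne a
    obtain ⟨m, rfl, -⟩ := exists_moebius_zero_eq_infty_eq hab.symm
    obtain ⟨g, hg⟩ := hY m
    rw [← hg, conj_pow, hsq, mul_one, mul_inv_cancel]
  mul_pow_three_eq_one hab := by
    obtain ⟨m, rfl, rfl⟩ := exists_moebius_zero_eq_infty_eq hab
    obtain ⟨g, hg⟩ := hY m
    rw [← hg, ← hg, conj_mul, conj_pow, hthree, mul_one, mul_inv_cancel]
  mul_sq_eq_one hab hac hbc := by
    obtain ⟨m, rfl, rfl, rfl | rfl⟩ := exists_moebius_zero_infty_one hs hab hac hbc <;>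
    obtain ⟨g, hg⟩ := hY m <;>
    simp only [← hg, conj_mul, conj_pow, hone, hns, mul_one, mul_inv_cancel]

end ProjectiveLine

section ConjFamily

variable {F G : Type*} [Field F] [Group G]

/-- The conjugates `z ^ χ x` for `x ∈ F` and `z ^ t` for `x = ∞`, where `g ^ h = h⁻¹ g h`. -/
def conjFamily (χ : AddChar F G) (t z : G) (x : OnePoint F) : G :=
  x.elim (t⁻¹ * z * t) fun x ↦ (χ x)⁻¹ * z * χ x

/-- The image `χ(1/x) χ(x)^t χ(1/x)` of the matrix with entries `0, -1/x, x, 0`. -/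
def weylElement (χ : AddChar F G) (t : G) (x : F) : G :=
  χ x⁻¹ * (t⁻¹ * χ x * t) * χ x⁻¹

variable {χ : AddChar F G} {h t z : G}

theorem conjFamily_infty : conjFamily χ t z ∞ = t⁻¹ * z * t := rfl

theorem conjFamily_coe (x : F) : conjFamily χ t z x = (χ x)⁻¹ * z * χ x := rfl

theorem conjFamily_zero : conjFamily χ t z (0 : F) = z := by
  simp [conjFamily_coe]

theorem conj_weylElement {j : F} (hj : j ≠ 0) (hχ : ∀ x, h⁻¹ * χ x * h = χ (j ^ 2 * x))
    (hht : SemiconjBy t h h⁻¹) (x : F) :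
    weylElement χ t (j ^ 2 * x) = h * weylElement χ t x * h⁻¹ := by
  have hχinv : χ (j ^ 2 * x)⁻¹ = h * χ x⁻¹ * h⁻¹ := by
    have := hχ (j ^ 2 * x)⁻¹
    rw [mul_inv, mul_inv_cancel_left₀ (pow_ne_zero 2 hj)] at this
    rw [← this, mul_inv]
    group
  have hth : t * h⁻¹ = h * t := by simpa using hht.inv_right.eq
  have hht' : h * t⁻¹ = t⁻¹ * h⁻¹ := hht.inv_symm_left.eq.symm
  calc weylElement χ t (j ^ 2 * x)
      = h * χ x⁻¹ * h⁻¹ * (t⁻¹ * h⁻¹ * χ x * (h * t)) * (h * χ x⁻¹ * h⁻¹) := by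
        rw [weylElement, hχinv, ← hχ]; group
    _ = h * χ x⁻¹ * h⁻¹ * (h * t⁻¹ * χ x * (t * h⁻¹)) * (h * χ x⁻¹ * h⁻¹) := by
        rw [hth, hht']
    _ = h * weylElement χ t x * h⁻¹ := by rw [weylElement]; group

/-- Each `t * weylElement χ t x` plays the role of a diagonal matrix. -/
theorem commute_mul_weylElement {j : F} (hj : j ≠ 0) (hχ : ∀ x, h⁻¹ * χ x * h = χ (j ^ 2 * x))
    (ht : t * t = 1) (hht : SemiconjBy t h h⁻¹) (hone : weylElement χ t 1 = t)
    (hjt : weylElement χ t j = h * t) (hzh : Commute z h) (n : ℕ) :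
    Commute z (t * weylElement χ t (j ^ n)) := by
  induction n using Nat.twoStepInduction with
  | zero => simp [hone, ht]
  | one =>
    rw [pow_one, hjt, ← mul_assoc, hht.eq, mul_assoc, ht, mul_one]
    exact hzh.inv_right
  | more n ih _ =>
    rw [show j ^ (n + 2) = j ^ 2 * j ^ n by ring, conj_weylElement hj hχ hht, ← mul_assoc,
      ← mul_assoc, hht.eq, mul_assoc h⁻¹]
    exact (hzh.inv_right.mul_right ih).mul_right hzh.inv_right

variable [DecidableEq F]

theorem conj_conjFamily_translation (hzχ : ∀ c, Commute z (t⁻¹ * χ c * t)) (ht : t * t = 1) (c : F)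
    (y : OnePoint F) :
    χ c * conjFamily χ t z y * (χ c)⁻¹ = conjFamily χ t z (moebius (translation c) y) := by
  induction y using OnePoint.rec with
  | infty =>
    have hcomm : Commute z (t * χ c * t⁻¹) := by
      simpa only [inv_eq_of_mul_eq_one_left ht] using hzχ c
    calc χ c * (t⁻¹ * z * t) * (χ c)⁻¹
        = t⁻¹ * (t * χ c * t⁻¹ * z) * t * (χ c)⁻¹ := by group
      _ = t⁻¹ * (z * (t * χ c * t⁻¹)) * t * (χ c)⁻¹ := by rw [hcomm.eq]
      _ = conjFamily χ t z (moebius (translation c) ∞) := by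
        rw [moebius_translation_infty, conjFamily_infty]
        group
  | coe y =>
    rw [moebius_translation_coe, conjFamily_coe, conjFamily_coe, sub_eq_add_neg,
      AddChar.map_add_eq_mul, AddChar.map_neg_eq_inv]
    group

theorem conj_conjFamily_inversion (hzχ : ∀ c, Commute z (t⁻¹ * χ c * t)) (ht : t * t = 1)
    (hz : ∀ x ≠ 0, Commute z (t * weylElement χ t x)) (y : OnePoint F) :
    t * conjFamily χ t z y * t⁻¹ = conjFamily χ t z (moebius inversion y) := by
  have htinv : t⁻¹ = t := inv_eq_of_mul_eq_one_left ht
  induction y using OnePoint.rec with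
  | infty =>
    rw [moebius_inversion_infty, conjFamily_infty, conjFamily_zero]
    group
  | coe y =>
    obtain rfl | hy := eq_or_ne y 0
    · rw [moebius_inversion_zero, conjFamily_infty, conjFamily_zero, htinv]
    · have hcomm : Commute z (χ y * t * χ y⁻¹) := by
        have := (hzχ y⁻¹).inv_right.mul_right (hz y hy)
        rwa [show (t⁻¹ * χ y⁻¹ * t)⁻¹ * (t * weylElement χ t y) = χ y * t * χ y⁻¹ by
          rw [weylElement, htinv]
          group] at this
      calc t * ((χ y)⁻¹ * z * χ y) * t⁻¹
          = t⁻¹ * ((χ y)⁻¹ * z * χ y) * t := by rw [htinv]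
        _ = χ y⁻¹ * (χ y * t * χ y⁻¹)⁻¹ * (z * (χ y * t * χ y⁻¹)) * (χ y⁻¹)⁻¹ := by group
        _ = χ y⁻¹ * z * (χ y⁻¹)⁻¹ := by rw [hcomm.eq]; group
        _ = conjFamily χ t z (moebius inversion y) := by
          rw [moebius_inversion_coe hy, conjFamily_coe, AddChar.map_neg_eq_inv, inv_inv]

end ConjFamily

/-! ### Groups satisfying the relations of the presentation -/

/-- The homomorphism `x ↦ g ^ x` on `ZMod n` for an element with `g ^ n = 1`. Unlike
`AddChar.zmodChar`, it takes values in a monoid that need not be commutative. -/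
def powAddChar {M : Type*} [Monoid M] {n : ℕ} [NeZero n] {g : M} (hg : g ^ n = 1) :
    AddChar (ZMod n) M where
  toFun x := g ^ x.val
  map_zero_eq_one' := by simp
  map_add_eq_mul' x y := by simp only [ZMod.val_add, ← pow_eq_pow_mod _ hg, ← pow_add]

theorem powAddChar_natCast {M : Type*} [Monoid M] {n : ℕ} [NeZero n] {g : M} (hg : g ^ n = 1)
    (k : ℕ) : powAddChar hg k = g ^ k := by
  rw [pow_eq_pow_mod k hg, ← ZMod.val_natCast]
  rfl

theorem pcomm_eq_mul_conj {G : Type} [Group G] {z : G} (hz : z ^ 2 = 1) (g : G) :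
    pcomm z g = z * (g⁻¹ * z * g) := by
  rw [pcomm, inv_eq_of_mul_eq_one_left (pow_two z ▸ hz)]
  group

theorem pcomm_eq_one_iff {G : Type} [Group G] {g h : G} : pcomm g h = 1 ↔ Commute g h := by
  rw [pcomm, ← mul_inv_rev, mul_assoc, inv_mul_eq_one, eq_comm]
  rfl

theorem map_pcomm {G H : Type} [Group G] [Group H] (φ : G →* H) (g h : G) :
    φ (pcomm g h) = pcomm (φ g) (φ h) := by
  simp only [pcomm, map_mul, map_inv]

/-- The images `f u, f h₂, f h, f t, f z` of the generators satisfy the relations of `S_{p+2}`. -/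
structure SpRelations {G : Type} [Group G] (p j jb tb s : ℕ) (f : SpGen → G) : Prop where
  u_pow : f .u ^ p = 1
  h2_conj_u : (f .h2)⁻¹ * f .u * f .h2 = f .u ^ 4
  h_conj_u : (f .h)⁻¹ * f .u * f .h = f .u ^ j ^ 2
  t_sq : f .t ^ 2 = 1
  t_conj_h : (f .t)⁻¹ * f .h * f .t = (f .h)⁻¹
  t_eq : f .t = f .u * ((f .t)⁻¹ * f .u * f .t) * f .u
  h2_mul_t : f .h2 * f .t = f .u ^ tb * ((f .t)⁻¹ * f .u ^ 2 * f .t) * f .u ^ tb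
  h_mul_t : f .h * f .t = f .u ^ jb * ((f .t)⁻¹ * f .u ^ j * f .t) * f .u ^ jb
  commute_z_conj : Commute (f .z) ((f .t)⁻¹ * f .u * f .t)
  commute_z_h : Commute (f .z) (f .h)
  z_sq : f .z ^ 2 = 1
  pcomm_t_pow : pcomm (f .z) (f .t) ^ 3 = 1
  pcomm_t_mul_pcomm_u_sq : (pcomm (f .z) (f .t) * pcomm (f .z) (f .u)) ^ 2 = 1
  pcomm_t_mul_pcomm_pow_sq : (pcomm (f .z) (f .t) * pcomm (f .z) (f .u ^ s)) ^ 2 = 1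
  z_mul_u_pow : (f .z * f .u) ^ (p + 1) = 1

namespace SpRelations

variable {p j jb tb s : ℕ} {G : Type} [Group G] {f : SpGen → G}

theorem forall_lift_eq_one_iff : (∀ r ∈ spRels p j jb tb s, FreeGroup.lift f r = 1) ↔
    SpRelations p j jb tb s f := by
  simp only [spRels, Set.mem_insert_iff, Set.mem_singleton_iff, forall_eq_or_imp, forall_eq,
    map_pcomm, pcomm_eq_one_iff, map_mul, map_pow, map_inv, FreeGroup.lift_apply_of,
    mul_inv_eq_one]
  constructor
  · rintro ⟨h₁, h₂, h₃, h₄, h₅, h₆, h₇, h₈, h₉, h₁₀, h₁₁, h₁₂, h₁₃, h₁₄, h₁₅⟩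
    exact ⟨h₁, h₂, h₃, h₄, eq_inv_of_mul_eq_one_left h₅, h₆.symm, h₇.symm, h₈.symm,
      h₉, h₁₀, h₁₁, h₁₂, h₁₃, h₁₄, h₁₅⟩
  · rintro ⟨h₁, h₂, h₃, h₄, h₅, h₆, h₇, h₈, h₉, h₁₀, h₁₁, h₁₂, h₁₃, h₁₄, h₁₅⟩
    exact ⟨h₁, h₂, h₃, h₄, mul_eq_one_iff_eq_inv.mpr h₅, h₆.symm, h₇.symm, h₈.symm,
      h₉, h₁₀, h₁₁, h₁₂, h₁₃, h₁₄, h₁₅⟩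

theorem presentedGroup_of : SpRelations p j jb tb s
    (PresentedGroup.of : SpGen → PresentedGroup (spRels p j jb tb s)) := by
  refine forall_lift_eq_one_iff.mp fun r hr ↦ ?_
  have : FreeGroup.lift PresentedGroup.of = PresentedGroup.mk (spRels p j jb tb s) :=
    FreeGroup.ext_hom _ _ fun x ↦ FreeGroup.lift_apply_of
  rw [this]
  exact PresentedGroup.one_of_mem hr

theorem t_mul_self (hf : SpRelations p j jb tb s f) : f .t * f .t = 1 :=
  pow_two (f .t) ▸ hf.t_sq

theorem semiconjBy_t_h (hf : SpRelations p j jb tb s f) : SemiconjBy (f .t) (f .h) (f .h)⁻¹ := by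
  have ht := inv_eq_of_mul_eq_one_left hf.t_mul_self
  rw [SemiconjBy, ← hf.t_conj_h, ht, mul_assoc _ (f .t), hf.t_mul_self, mul_one]

theorem u_mem_of_normal (hf : SpRelations p j jb tb s f) {N : Subgroup G} [N.Normal]
    (hz : f .z ∈ N) : f .u ∈ N := by
  have h : ((f .z * f .u : G) : G ⧸ N) ^ (p + 1) = 1 := by
    rw [← QuotientGroup.mk_pow, hf.z_mul_u_pow, QuotientGroup.mk_one]
  rwa [QuotientGroup.mk_mul, (QuotientGroup.eq_one_iff _).mpr hz, one_mul, ← QuotientGroup.mk_pow,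
    pow_succ, hf.u_pow, one_mul, QuotientGroup.eq_one_iff] at h

theorem eq_top_of_mem (hf : SpRelations p j jb tb s f)
    (hgen : Subgroup.closure (Set.range f) = ⊤) {H : Subgroup G} (hu : f .u ∈ H) (ht : f .t ∈ H)
    (hz : f .z ∈ H) : H = ⊤ := by
  rw [eq_top_iff, ← hgen, Subgroup.closure_le, Set.range_subset_iff]
  have hconj (n : ℕ) : (f .t)⁻¹ * f .u ^ n * f .t ∈ H :=
    mul_mem (mul_mem (inv_mem ht) (pow_mem hu n)) ht
  rintro (_ | _ | _ | _ | _)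
  · exact hu
  · refine (H.mul_mem_cancel_right ht).mp ?_
    rw [hf.h2_mul_t]
    exact mul_mem (mul_mem (pow_mem hu _) (hconj _)) (pow_mem hu _)
  · refine (H.mul_mem_cancel_right ht).mp ?_
    rw [hf.h_mul_t]
    exact mul_mem (mul_mem (pow_mem hu _) (hconj _)) (pow_mem hu _)
  · exact ht
  · exact hz

variable [Fact p.Prime]

theorem h_conj_powAddChar (hf : SpRelations p j jb tb s f) (x : ZMod p) :
    (f .h)⁻¹ * powAddChar hf.u_pow x * f .h = powAddChar hf.u_pow (j ^ 2 * x) := by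
  obtain ⟨n, rfl⟩ := ZMod.natCast_zmod_surjective x
  have hconj := conj_pow (i := n) (a := (f .h)⁻¹) (b := f .u)
  rw [inv_inv, hf.h_conj_u] at hconj
  rw_mod_cast [powAddChar_natCast, powAddChar_natCast, ← hconj, pow_mul]

theorem commute_z_conj_powAddChar (hf : SpRelations p j jb tb s f) (x : ZMod p) :
    Commute (f .z) ((f .t)⁻¹ * powAddChar hf.u_pow x * f .t) := by
  have hconj := conj_pow (i := x.val) (a := (f .t)⁻¹) (b := f .u)
  rw [inv_inv] at hconj
  change Commute (f .z) ((f .t)⁻¹ * f .u ^ x.val * f .t)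
  rw [← hconj]
  exact hf.commute_z_conj.pow_right _

theorem weylElement_one (hf : SpRelations p j jb tb s f) :
    weylElement (powAddChar hf.u_pow) (f .t) 1 = f .t := by
  have hu := powAddChar_natCast hf.u_pow 1
  rw [Nat.cast_one, pow_one] at hu
  rw [weylElement, inv_one, hu, ← hf.t_eq]

theorem weylElement_natCast (hf : SpRelations p j jb tb s f) (hj : (j : ZMod p) * jb = 1) :
    weylElement (powAddChar hf.u_pow) (f .t) j = f .h * f .t := by
  rw [weylElement, inv_eq_of_mul_eq_one_right hj, powAddChar_natCast, powAddChar_natCast,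
    hf.h_mul_t]

theorem commute_z_mul_weylElement (hf : SpRelations p j jb tb s f)
    (hj : (j : ZMod p) * jb = 1)
    (hjgen : ∀ x : (ZMod p)ˣ, ∃ k : ℕ, (x : ZMod p) = (j : ZMod p) ^ k)
    {x : ZMod p} (hx : x ≠ 0) :
    Commute (f .z) (f .t * weylElement (powAddChar hf.u_pow) (f .t) x) := by
  obtain ⟨k, hk⟩ := hjgen (Units.mk0 x hx)
  rw [Units.val_mk0] at hk
  rw [hk]
  exact commute_mul_weylElement (left_ne_zero_of_mul_eq_one hj) hf.h_conj_powAddChar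
    hf.t_mul_self hf.semiconjBy_t_h hf.weylElement_one (hf.weylElement_natCast hj)
    hf.commute_z_h k

/-- The conjugates `z ^ (u ^ x)` for `x ∈ ℤ/p`, together with `z ^ t` at infinity. -/
def involutions (hf : SpRelations p j jb tb s f) : OnePoint (ZMod p) → G :=
  conjFamily (powAddChar hf.u_pow) (f .t) (f .z)

theorem involutions_zero (hf : SpRelations p j jb tb s f) : hf.involutions (0 : ZMod p) = f .z :=
  conjFamily_zero

theorem involutions_natCast (hf : SpRelations p j jb tb s f) (n : ℕ) :
    hf.involutions (n : ZMod p) = (f .u ^ n)⁻¹ * f .z * f .u ^ n := by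
  rw [involutions, conjFamily_coe, powAddChar_natCast]

theorem u_conj_involutions (hf : SpRelations p j jb tb s f) (x : OnePoint (ZMod p)) :
    f .u * hf.involutions x * (f .u)⁻¹ = hf.involutions (moebius (translation 1) x) := by
  have h := conj_conjFamily_translation hf.commute_z_conj_powAddChar hf.t_mul_self 1 x
  have hu := powAddChar_natCast hf.u_pow 1
  rw [Nat.cast_one, pow_one] at hu
  rwa [hu] at h

theorem t_conj_involutions (hf : SpRelations p j jb tb s f) (hj : (j : ZMod p) * jb = 1)
    (hjgen : ∀ x : (ZMod p)ˣ, ∃ k : ℕ, (x : ZMod p) = (j : ZMod p) ^ k) (x : OnePoint (ZMod p)) :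
    f .t * hf.involutions x * (f .t)⁻¹ = hf.involutions (moebius inversion x) :=
  conj_conjFamily_inversion hf.commute_z_conj_powAddChar hf.t_mul_self
    (fun _ ↦ hf.commute_z_mul_weylElement hj hjgen) x

theorem carmichaelRelations_involutions (hf : SpRelations p j jb tb s f)
    (hj : (j : ZMod p) * jb = 1)
    (hjgen : ∀ x : (ZMod p)ˣ, ∃ k : ℕ, (x : ZMod p) = (j : ZMod p) ^ k)
    (hs : ¬ IsSquare (s : ZMod p)) : CarmichaelRelations hf.involutions := by
  have hY (m : SL(2, ZMod p)) :
      ∃ g, ∀ x, g * hf.involutions x * g⁻¹ = hf.involutions (moebius m x) :=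
    exists_conj_eq_moebius
      (fun c ↦ ⟨_, conj_conjFamily_translation hf.commute_z_conj_powAddChar
        hf.t_mul_self c⟩)
      ⟨_, hf.t_conj_involutions hj hjgen⟩ m
  have hinfty : hf.involutions (0 : ZMod p) * hf.involutions ∞ = pcomm (f .z) (f .t) := by
    rw [pcomm_eq_mul_conj hf.z_sq, involutions_zero]; rfl
  have hcoe (n : ℕ) : hf.involutions (0 : ZMod p) * hf.involutions (n : ZMod p) =
      pcomm (f .z) (f .u ^ n) := by
    rw [pcomm_eq_mul_conj hf.z_sq, involutions_zero, involutions_natCast]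
  refine CarmichaelRelations.of_conj hY hs ?_ ?_ ?_ ?_
  · rw [involutions_zero, hf.z_sq]
  · rw [hinfty, hf.pcomm_t_pow]
  · rw [mul_assoc, hinfty, ← Nat.cast_one, hcoe, pow_one, hf.pcomm_t_mul_pcomm_u_sq]
  · rw [mul_assoc, hinfty, hcoe, hf.pcomm_t_mul_pcomm_pow_sq]

theorem closure_range_involutions (hf : SpRelations p j jb tb s f)
    (hgen : Subgroup.closure (Set.range f) = ⊤) (hj : (j : ZMod p) * jb = 1)
    (hjgen : ∀ x : (ZMod p)ˣ, ∃ k : ℕ, (x : ZMod p) = (j : ZMod p) ^ k) :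
    Subgroup.closure (Set.range hf.involutions) = ⊤ := by
  set N := Subgroup.closure (Set.range hf.involutions)
  have hz : f .z ∈ N := Subgroup.subset_closure ⟨(0 : ZMod p), hf.involutions_zero⟩
  have hnorm {g : G} {m : SL(2, ZMod p)}
      (hg : ∀ x, g * hf.involutions x * g⁻¹ = hf.involutions (moebius m x)) :
      g ∈ Subgroup.normalizer N := by
    refine Subgroup.normalizer_le_normalizer_closure _ ?_
    rw [Subgroup.mem_normalizer_iff_conj_image_eq, ← Set.range_comp]
    exact (congrArg Set.range (funext hg)).trans ((moebius m).surjective.range_comp _)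
  have : N.Normal := by
    rw [← Subgroup.normalizer_eq_top_iff]
    exact hf.eq_top_of_mem hgen (hnorm hf.u_conj_involutions)
      (hnorm (hf.t_conj_involutions hj hjgen)) (Subgroup.le_normalizer hz)
  have hu : f .u ∈ N := hf.u_mem_of_normal hz
  have ht : f .t ∈ N := by
    rw [hf.t_eq]
    exact mul_mem (mul_mem hu (by simpa using ‹N.Normal›.conj_mem _ hu (f .t)⁻¹)) hu
  exact hf.eq_top_of_mem hgen hu ht hz

theorem finite_and_natCard_le (hf : SpRelations p j jb tb s f)
    (hgen : Subgroup.closure (Set.range f) = ⊤) (hj : (j : ZMod p) * jb = 1)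
    (hjgen : ∀ x : (ZMod p)ˣ, ∃ k : ℕ, (x : ZMod p) = (j : ZMod p) ^ k)
    (hs : ¬ IsSquare (s : ZMod p)) : Finite G ∧ Nat.card G ≤ (p + 2).factorial := by
  have h := (hf.carmichaelRelations_involutions hj hjgen hs).finite_and_natCard_le
    (hf.closure_range_involutions hgen hj hjgen)
  rwa [show Nat.card (OnePoint (ZMod p)) = p + 1 by
    rw [OnePoint, Finite.card_option, Nat.card_zmod]] at h

end SpRelations

/-! ### The permutation model -/

/-- The permutations of `α`, extended to `Option α` by fixing `none`. -/
def permOption (α : Type*) : Equiv.Perm α →* Equiv.Perm (Option α) where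
  toFun := Equiv.optionCongr
  map_one' := Equiv.optionCongr_one
  map_mul' σ τ := Equiv.optionCongr_trans τ σ

section Swap

open Equiv

variable {α : Type*} [DecidableEq α]

theorem swap_none_mul_swap_none_mul_swap_none {a b : α} (hab : a ≠ b) :
    swap none (some a) * swap none (some b) * swap none (some a) = swap (some a) (some b) := by
  have h := swap_mul_swap_mul_swap (Option.some_ne_none b) (Option.some_injective _ |>.ne hab.symm)
  rwa [swap_comm (some b) none] at h

theorem carmichaelRelations_swap_none :
    CarmichaelRelations fun a : α ↦ swap none (some a) where
  sq_eq_one a := by rw [pow_two, swap_mul_self]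
  mul_pow_three_eq_one {a b} hab := by
    calc (swap none (some a) * swap none (some b)) ^ 3
        = swap none (some a) * swap none (some b) * swap none (some a) *
            (swap none (some b) * swap none (some a) * swap none (some b)) := by
          rw [pow_three]; group
      _ = 1 := by
          rw [swap_none_mul_swap_none_mul_swap_none hab,
            swap_none_mul_swap_none_mul_swap_none hab.symm, swap_comm, swap_mul_self]
  mul_sq_eq_one {a b c} hab hac hbc := by
    have h : Commute (swap (some a) (some b)) (swap none (some c)) := by
      refine (Perm.disjoint_swap_swap ?_).commute
      simp [hab, hac, hbc]
    rw [swap_none_mul_swap_none_mul_swap_none hab, h.mul_pow, pow_two, pow_two, swap_mul_self,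
      swap_mul_self, one_mul]

theorem eq_top_of_forall_swap_none_mem [Finite α] {H : Subgroup (Perm (Option α))}
    (h : ∀ a, swap none (some a) ∈ H) : H = ⊤ := by
  have hnone (a : Option α) : swap none a ∈ H := by
    cases a with
    | none => exact swap_self (none : Option α) ▸ one_mem H
    | some a => exact h a
  rw [eq_top_iff, ← Perm.closure_isSwap, Subgroup.closure_le]
  rintro _ ⟨a, b, -, rfl⟩
  exact SubmonoidClass.swap_mem_trans H (swap_comm none a ▸ hnone a) (hnone b)

end Swap

theorem pow_eq_one_of_pow_apply_eq {α : Type*} {σ : Equiv.Perm α} {n : ℕ} {a : α}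
    (ha : (σ ^ n) a = a) (h : ∀ b, σ b = b ∨ ∃ k : ℕ, (σ ^ k) a = b) : σ ^ n = 1 := by
  ext b
  obtain hb | ⟨k, rfl⟩ := h b
  · exact Equiv.Perm.pow_apply_eq_self_of_apply_eq_self hb n
  · rw [← Equiv.Perm.mul_apply, ← pow_add, add_comm, pow_add, Equiv.Perm.mul_apply, ha,
      Equiv.Perm.one_apply]

section Model

open Equiv Matrix.SpecialLinearGroup

instance {α : Type*} [DecidableEq α] : DecidableEq (OnePoint α) :=
  inferInstanceAs (DecidableEq (Option α))

variable {F : Type*} [Field F] [DecidableEq F]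

/-- The action of `SL(2, F)` on the projective line together with an extra fixed point. -/
noncomputable def moebiusOption : SL(2, F) →* Perm (Option (OnePoint F)) :=
  (permOption _).comp moebius

theorem moebiusOption_none (m : SL(2, F)) : moebiusOption m none = none := rfl

theorem moebiusOption_some (m : SL(2, F)) (x : OnePoint F) :
    moebiusOption m (some x) = some (moebius m x) := rfl

theorem moebiusOption_conj_swap_none (m : SL(2, F)) (x : OnePoint F) :
    moebiusOption m * swap none (some x) * (moebiusOption m)⁻¹ = swap none (some (moebius m x)) :=
  (swap_apply_apply (moebiusOption m) none (some x)).symm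

theorem moebiusOption_inv_conj_swap_none {m : SL(2, F)} {x y : OnePoint F} (h : moebius m x = y) :
    (moebiusOption m)⁻¹ * swap none (some y) * moebiusOption m = swap none (some x) := by
  rw [← h, ← moebiusOption_conj_swap_none]
  group

theorem commute_swap_none_moebiusOption {m : SL(2, F)} {x : OnePoint F} (h : moebius m x = x) :
    Commute (swap none (some x)) (moebiusOption m) := by
  have hconj := moebiusOption_inv_conj_swap_none h
  rwa [mul_assoc, inv_mul_eq_iff_eq_mul] at hconj

theorem moebiusOption_translation_natCast (n : ℕ) :
    moebiusOption (translation (n : F)) = moebiusOption (translation 1) ^ n := by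
  rw [← map_pow, ← AddChar.map_nsmul_eq_pow, nsmul_one]

/-- The images of the generators in the permutations of the projective line with an extra point:
the Möbius transformations `x ↦ x - 1`, `x ↦ a² x`, `x ↦ b² x`, `x ↦ -1 / x` for `u, h₂, h, t`, and
the transposition of the extra point with `0` for `z`. -/
noncomputable def spPerm {a b : F} (ha : a ≠ 0) (hb : b ≠ 0) : SpGen → Perm (Option (OnePoint F))
  | .u => moebiusOption (translation 1)
  | .h2 => moebiusOption (diag2 a ha)
  | .h => moebiusOption (diag2 b hb)
  | .t => moebiusOption inversion
  | .z => swap none (some (0 : F))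

theorem swap_mul_translation_pow_none {p : ℕ} [Fact p.Prime] {k : ℕ} (hk : k < p) :
    ((swap none (some ((0 : ZMod p) : OnePoint (ZMod p))) * moebiusOption (translation 1)) ^ (k + 1)
      : Perm (Option (OnePoint (ZMod p)))) none = some ((-k : ZMod p) : OnePoint (ZMod p)) := by
  induction k with
  | zero => simp [Perm.mul_apply, moebiusOption_none]
  | succ k ih =>
    have hk₀ : (-(k : ZMod p) - 1) ≠ 0 := by
      rw [← neg_add', neg_ne_zero]
      exact_mod_cast mt (ZMod.natCast_eq_zero_iff (k + 1) p).mp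
        (Nat.not_dvd_of_pos_of_lt k.succ_pos hk)
    rw [pow_succ', Perm.mul_apply, ih (by lia), Perm.mul_apply, moebiusOption_some,
      moebius_translation_coe, swap_apply_of_ne_of_ne (Option.some_ne_none _), Nat.cast_succ,
      neg_add']
    simpa using hk₀

theorem swap_mul_translation_pow {p : ℕ} [hp : Fact p.Prime] :
    (swap none (some ((0 : ZMod p) : OnePoint (ZMod p))) * moebiusOption (translation 1)) ^ (p + 1)
      = 1 := by
  have hpow {k : ℕ} (hk : k < p) := swap_mul_translation_pow_none hk
  refine pow_eq_one_of_pow_apply_eq (a := none) ?_ fun x ↦ ?_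
  · have hlast : (-((p - 1 : ℕ) : ZMod p)) = 1 := by
      rw [Nat.cast_pred hp.out.pos, CharP.cast_eq_zero, zero_sub, neg_neg]
    have h := hpow (Nat.sub_one_lt hp.out.ne_zero)
    rw [hlast, Nat.sub_add_cancel hp.out.one_le] at h
    rw [pow_succ', Perm.mul_apply, h, Perm.mul_apply, moebiusOption_some, moebius_translation_coe,
      sub_self, swap_apply_right]
  · match x with
    | none => exact .inr ⟨0, rfl⟩
    | some ∞ =>
      rw [Perm.mul_apply, moebiusOption_some, moebius_translation_infty]
      exact .inl (swap_apply_of_ne_of_ne (by simp) (by simp))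
    | some (x : ZMod p) =>
      refine .inr ⟨(-x).val + 1, ?_⟩
      rw [hpow (ZMod.val_lt _), ZMod.natCast_val, ZMod.cast_id, neg_neg]

theorem pcomm_spPerm_z_t {F : Type} [Field F] [DecidableEq F] {a b : F}
    (ha : a ≠ 0) (hb : b ≠ 0) :
    pcomm (spPerm ha hb .z) (spPerm ha hb .t) =
      swap none (some ((0 : F) : OnePoint F)) * swap none (some ∞) := by
  rw [spPerm, spPerm, pcomm_eq_mul_conj (carmichaelRelations_swap_none.sq_eq_one _),
    moebiusOption_inv_conj_swap_none moebius_inversion_infty]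

theorem pcomm_spPerm_z_u_pow {F : Type} [Field F] [DecidableEq F] {a b : F}
    (ha : a ≠ 0) (hb : b ≠ 0) (n : ℕ) :
    pcomm (spPerm ha hb .z) (spPerm ha hb .u ^ n) =
      swap none (some ((0 : F) : OnePoint F)) * swap none (some ((n : F) : OnePoint F)) := by
  rw [spPerm, spPerm, pcomm_eq_mul_conj (carmichaelRelations_swap_none.sq_eq_one _),
    ← moebiusOption_translation_natCast, moebiusOption_inv_conj_swap_none]
  rw [moebius_translation_coe, sub_self]

theorem spRelations_spPerm {p j jb tb s : ℕ} [Fact p.Prime] (hj : (j : ZMod p) * jb = 1)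
    (ht : (2 : ZMod p) * tb = 1) (hs : (s : ZMod p) ≠ 0) :
    SpRelations p j jb tb s
      (spPerm (right_ne_zero_of_mul_eq_one ht) (right_ne_zero_of_mul_eq_one hj)) where
  u_pow := by
    rw [spPerm, ← moebiusOption_translation_natCast, CharP.cast_eq_zero,
      AddChar.map_zero_eq_one, map_one]
  h2_conj_u := by
    simp only [spPerm, ← map_inv, ← map_mul, ← moebiusOption_translation_natCast]
    rw [diag2_inv_mul_translation_mul_diag2 ht]
    norm_num
  h_conj_u := by
    simp only [spPerm, ← map_inv, ← map_mul, ← moebiusOption_translation_natCast]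
    rw [diag2_inv_mul_translation_mul_diag2 hj, Nat.cast_pow, mul_one]
  t_sq := by
    rw [spPerm, moebiusOption, MonoidHom.comp_apply, ← map_pow, moebius_inversion_sq, map_one]
  t_conj_h := by
    simp only [spPerm, ← map_inv, ← map_mul, inversion_inv_mul_diag2_mul_inversion]
  t_eq := by
    simp only [spPerm, ← map_inv, ← map_mul]
    rw [translation_mul_conj_mul_translation (one_mul 1), diag2_one, one_mul]
  h2_mul_t := by
    simp only [spPerm, ← map_inv, ← map_mul, ← moebiusOption_translation_natCast, Nat.cast_ofNat]
    rw [translation_mul_conj_mul_translation ht]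
  h_mul_t := by
    simp only [spPerm, ← map_inv, ← map_mul, ← moebiusOption_translation_natCast]
    rw [translation_mul_conj_mul_translation hj]
  commute_z_conj := by
    simp only [spPerm, ← map_inv, ← map_mul]
    apply commute_swap_none_moebiusOption
    rw [map_mul, map_mul, map_inv, Perm.mul_apply, Perm.mul_apply, moebius_inversion_zero,
      moebius_translation_infty, Perm.inv_eq_iff_eq, moebius_inversion_zero]
  commute_z_h := commute_swap_none_moebiusOption (by rw [moebius_diag2_coe, mul_zero])
  z_sq := by rw [spPerm, pow_two, swap_mul_self]
  pcomm_t_pow := by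
    rw [pcomm_spPerm_z_t]
    exact carmichaelRelations_swap_none.mul_pow_three_eq_one (OnePoint.coe_ne_infty 0)
  pcomm_t_mul_pcomm_u_sq := by
    rw [← pow_one (spPerm _ _ .u), pcomm_spPerm_z_t, pcomm_spPerm_z_u_pow, ← mul_assoc,
      Nat.cast_one]
    exact carmichaelRelations_swap_none.mul_sq_eq_one (OnePoint.coe_ne_infty 0)
      (by simp) (OnePoint.infty_ne_coe 1)
  pcomm_t_mul_pcomm_pow_sq := by
    rw [pcomm_spPerm_z_t, pcomm_spPerm_z_u_pow, ← mul_assoc]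
    exact carmichaelRelations_swap_none.mul_sq_eq_one (OnePoint.coe_ne_infty 0)
      (by simpa using hs.symm) (OnePoint.infty_ne_coe _)
  z_mul_u_pow := swap_mul_translation_pow

theorem closure_range_spPerm {p : ℕ} [Fact p.Prime] {a b : ZMod p} (ha : a ≠ 0) (hb : b ≠ 0) :
    Subgroup.closure (Set.range (spPerm ha hb)) = ⊤ := by
  set H := Subgroup.closure (Set.range (spPerm ha hb))
  have hgen (x : SpGen) : spPerm ha hb x ∈ H := Subgroup.subset_closure ⟨x, rfl⟩
  have hmoebius (m : SL(2, ZMod p)) : moebiusOption m ∈ H := by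
    induction m using translation_inversion_induction with
    | htranslation c =>
      obtain ⟨n, rfl⟩ := ZMod.natCast_zmod_surjective c
      rw [moebiusOption_translation_natCast]
      exact pow_mem (hgen .u) n
    | hinversion => exact hgen .t
    | hinv m ih => rw [map_inv]; exact inv_mem ih
    | hmul m n ihm ihn => rw [map_mul]; exact mul_mem ihm ihn
  refine eq_top_of_forall_swap_none_mem fun x ↦ ?_
  obtain ⟨m, hm⟩ := exists_moebius_infty_eq x
  have hm₀ : moebius (m * inversion) (0 : ZMod p) = x := by
    rw [map_mul, Perm.mul_apply, moebius_inversion_zero, hm]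
  rw [← hm₀, ← moebiusOption_conj_swap_none]
  exact mul_mem (mul_mem (hmoebius _) (hgen .z)) (inv_mem (hmoebius _))

end Model

theorem natCard_option_onePoint_zmod (p : ℕ) [NeZero p] :
    Nat.card (Option (OnePoint (ZMod p))) = p + 2 := by
  rw [Finite.card_option, OnePoint, Finite.card_option, Nat.card_zmod]

theorem presentation_of_symmetric_p_plus_two_general {p : ℕ} (hp : p.Prime) {j jb tb s : ℕ}
    (hjgen : ∀ x : (ZMod p)ˣ, ∃ k : ℕ, (x : ZMod p) = (j : ZMod p) ^ k)
    (hjb : (j : ZMod p) * jb = 1) (htb : (2 : ZMod p) * tb = 1) (hs : ¬ IsSquare (s : ZMod p)) :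
    Nonempty (PresentedGroup (spRels p j jb tb s) ≃* Equiv.Perm (Fin (p + 2))) := by
  have : Fact p.Prime := ⟨hp⟩
  have hs₀ : (s : ZMod p) ≠ 0 := fun h ↦ hs (h ▸ IsSquare.zero)
  have hf := spRelations_spPerm hjb htb hs₀
  let φ := PresentedGroup.toGroup (SpRelations.forall_lift_eq_one_iff.mpr hf)
  have hφ : Function.Surjective φ := by
    rw [← MonoidHom.range_eq_top, eq_top_iff,
      ← closure_range_spPerm (right_ne_zero_of_mul_eq_one htb) (right_ne_zero_of_mul_eq_one hjb),
      Subgroup.closure_le]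
    rintro _ ⟨x, rfl⟩
    exact ⟨PresentedGroup.of x, PresentedGroup.toGroup.of _⟩
  obtain ⟨_, hcard⟩ := (SpRelations.presentedGroup_of (tb := tb)).finite_and_natCard_le
    (PresentedGroup.closure_range_of _) hjb hjgen hs
  have hbij : Function.Bijective φ := by
    refine hφ.bijective_of_nat_card_le ?_
    rwa [Nat.card_perm, natCard_option_onePoint_zmod]
  exact ⟨(MulEquiv.ofBijective φ hbij).trans
    (Finite.equivFinOfCardEq (natCard_option_onePoint_zmod p)).permCongrHom⟩

theorem natCast_mul_natCast_eq_one_of_mod_eq_one {p a b : ℕ} (h : a * b % p = 1) :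
    (a : ZMod p) * b = 1 := by
  rw [← Nat.cast_mul, ← ZMod.natCast_mod, h, Nat.cast_one]

/-- For a prime `p > 3`, a generator `j` of `(ℤ/p)ˣ` with inverses `j̄, 2̄` of `j, 2`
modulo `p`, and a non-square `s` modulo `p`, the group presented by `u, h₂, h, t, z`
subject to the fifteen relations of `spRels` is isomorphic to the symmetric group
`S_{p+2}`. -/
theorem presentation_of_symmetric_p_plus_two
    (p : ℕ) (hp : p.Prime) (hp3 : 3 < p)
    (j : ℕ) (hj1 : 1 ≤ j) (hjp : j ≤ p - 1)
    (hjgen : ∀ x : (ZMod p)ˣ, ∃ k : ℕ, (x : ZMod p) = (j : ZMod p) ^ k)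
    (jb : ℕ) (hjb1 : 1 ≤ jb) (hjbp : jb ≤ p) (hjb : (j * jb) % p = 1)
    (tb : ℕ) (htb1 : 1 ≤ tb) (htbp : tb ≤ p) (htb : (2 * tb) % p = 1)
    (s : ℕ) (hs1 : 1 ≤ s) (hsp : s ≤ p - 1) (hs : ¬ IsSquare ((s : ZMod p))) :
    Nonempty (PresentedGroup (spRels p j jb tb s) ≃* Equiv.Perm (Fin (p + 2))) := by
  exact presentation_of_symmetric_p_plus_two_general hp hjgen
    (natCast_mul_natCast_eq_one_of_mod_eq_one hjb)
    (mod_cast natCast_mul_natCast_eq_one_of_mod_eq_one htb) hs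
end
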